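/- arXiv:2604.04227 — 2 statements merged into one kernel-verified Lean document; each statement's English description precedes it below -/
import Mathlib

section
/- Let X and Y be Polish spaces, let μ and ν be Borel probability measures on X and Y, and let c : X × Y → ℝ be a real-valued lower semicontinuous cost satisfying the standing assumption. Let π ∈ M(μ,ν) be a coupling with ∫ c dπ < ∞. Then π is an optimal transport plan (i.e., ∫ c dπ = inf_{π' ∈ M(μ,ν)} ∫ c dπ') if and only if π is concentrated on a c-cyclically monotone subset of X × Y. -/
open MeasureTheory Set

/-- A coupling of `(μ, ν)`: a measure on the product whose marginals are `μ` and `ν`. -/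
def IsCoupling {X Y : Type*} [MeasurableSpace X] [MeasurableSpace Y]
    (π : Measure (X × Y)) (μ : Measure X) (ν : Measure Y) : Prop :=
  π.map Prod.fst = μ ∧ π.map Prod.snd = ν

/-- `Γ ⊆ X × Y` is `c`-cyclically monotone: for any finite cycle of points of `Γ`,
shifting the `y`-components cyclically cannot decrease the total cost. -/
def CyclicallyMonotone {X Y : Type*} (c : X × Y → ℝ) (Γ : Set (X × Y)) : Prop :=
  ∀ (K : ℕ) (x : Fin (K + 1) → X) (y : Fin (K + 1) → Y),
    (∀ k, (x k, y k) ∈ Γ) →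
    ∑ k, c (x k, y k) ≤ ∑ k, c (x k, y (k + 1))

/-!
Both directions pass through the absence of a duality gap: the cost of `π` is the supremum of
`∫ φ dμ + ∫ ψ dν` over dual pairs `φ ⊕ ψ ≤ c`. Such a plan is optimal, and along a maximizing
sequence `φ n ⊕ ψ n` tends to `c` almost everywhere (after passing to a subsequence), so that `π`
lives on a set where `c` is a limit of such sums; summing over cycles, this set is cyclically
monotone. Subtracting `a ⊕ b`, one may take `c ≥ 0`.

If `π` is concentrated on a cyclically monotone `Γ`, Rüschendorf's infima over chains in `Γ` give
potentials whose difference is `c` on `Γ`, and truncating them gives dual pairs whose values tend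
to `∫ c dπ`. They are measurable because Lusin's theorem shrinks `Γ` to a countable union of compact
sets on each of which `c` is continuous: on chains with prescribed compact pieces the infimum of a
lower semicontinuous function over a compact set is lower semicontinuous.

If `π` is optimal, let `c` be the increasing limit of bounded continuous `f n ≥ 0`. An optimal plan
for `f n` has cyclically monotone support, since otherwise rerouting mass near a violating cycle
would lower its cost, and hence has no duality gap. As the set of couplings is weakly compact, the
optimal costs for `f n` tend to the optimal cost for `c`, and dual pairs for `f n` are dual pairs
for `c`.
-/

open Filter Topology ProbabilityTheory BoundedContinuousFunction

section Lusin

variable {Z E : Type*} [TopologicalSpace E]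

lemma isCompact_of_finer {t' t : TopologicalSpace Z} (hle : t' ≤ t) {K : Set Z}
    (hK : @IsCompact Z t' K) : @IsCompact Z t K := by
  simpa only [image_id] using @IsCompact.image Z Z t' t K id hK (continuous_id_iff_le.2 hle)

lemma continuousOn_of_isCompact_of_finer {t' : TopologicalSpace Z} [t : TopologicalSpace Z]
    [T2Space Z] (hle : t' ≤ t) {f : Z → E} (hf : @Continuous Z E t' _ f) {K : Set Z}
    (hK : @IsCompact Z t' K) : ContinuousOn f K := by
  refine continuousOn_iff_isClosed.2 fun F hF => ⟨f ⁻¹' F ∩ K, ?_, by simp [inter_assoc]⟩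
  have hFK := @IsCompact.inter_left Z t' _ _ hK (@IsClosed.preimage Z E t' _ f hf F hF)
  exact (isCompact_of_finer hle hFK).isClosed

variable [MeasurableSpace E] [OpensMeasurableSpace E] [SecondCountableTopology E]
  [t : TopologicalSpace Z] [pol : PolishSpace Z] [m : MeasurableSpace Z] [bor : BorelSpace Z]

lemma exists_finer_polishSpace_continuous {f : Z → E} (hf : Measurable f) :
    ∃ t' ≤ t, @PolishSpace Z t' ∧ @BorelSpace Z t' m ∧ @Continuous Z E t' _ f := by
  obtain ⟨t', hle, hcont, hpol⟩ := hf.exists_continuous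
  exact ⟨t', hle, hpol,
    @BorelSpace.mk Z t' m (bor.measurable_eq.trans (borel_eq_borel_of_le hpol pol hle).symm), hcont⟩

lemma exists_isCompact_continuousOn_sdiff_lt (π : Measure Z) [IsFiniteMeasure π] {f : Z → E}
    (hf : Measurable f) {Γ : Set Z} (hΓ : MeasurableSet Γ) {ε : ENNReal} (hε : ε ≠ 0) :
    ∃ K ⊆ Γ, IsCompact K ∧ ContinuousOn f K ∧ π (Γ \ K) < ε := by
  obtain ⟨t', hle, hpol, hbor, hcont⟩ := exists_finer_polishSpace_continuous hf
  obtain ⟨K, hKΓ, hK, hlt⟩ :=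
    @MeasurableSet.exists_isCompact_sdiff_lt Z m π t' inferInstance inferInstance inferInstance Γ
      hΓ (measure_ne_top π Γ) ε hε
  exact ⟨K, hKΓ, isCompact_of_finer hle hK,
    continuousOn_of_isCompact_of_finer (t := t) hle hcont hK, hlt⟩

lemma exists_seq_isCompact_continuousOn_sdiff_iUnion_eq_zero (π : Measure Z) [IsFiniteMeasure π]
    {f : Z → E} (hf : Measurable f) {Γ : Set Z} (hΓ : MeasurableSet Γ) :
    ∃ K : ℕ → Set Z, (∀ n, K n ⊆ Γ) ∧ (∀ n, IsCompact (K n)) ∧ (∀ n, ContinuousOn f (K n)) ∧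
      π (Γ \ ⋃ n, K n) = 0 := by
  choose K hKΓ hK hf hlt using fun n : ℕ => exists_isCompact_continuousOn_sdiff_lt π hf hΓ
    (ENNReal.inv_ne_zero.2 (ENNReal.natCast_ne_top n))
  refine ⟨K, hKΓ, hK, hf, le_zero_iff.1 (ge_of_tendsto' ENNReal.tendsto_inv_nat_nhds_zero ?_)⟩
  exact fun n => (measure_mono (sdiff_subset_sdiff_right (subset_iUnion K n))).trans (hlt n).le

end Lusin

section CyclicallyMonotone

variable {X Y : Type*} {c : X × Y → ℝ} {Γ Γ' : Set (X × Y)}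

lemma sum_comp_add_one {M : Type*} [AddCommMonoid M] {K : ℕ} (f : Fin (K + 1) → M) :
    ∑ k, f (k + 1) = ∑ k, f k :=
  Equiv.sum_comp (Equiv.addRight 1) f

lemma CyclicallyMonotone.mono (h : CyclicallyMonotone c Γ) (hs : Γ' ⊆ Γ) :
    CyclicallyMonotone c Γ' :=
  fun K x y hxy => h K x y fun k => hs (hxy k)

lemma cyclicallyMonotone_sub_iff {a : X → ℝ} {b : Y → ℝ} :
    CyclicallyMonotone (fun z => c z - (a z.1 + b z.2)) Γ ↔ CyclicallyMonotone c Γ := by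
  refine forall₄_congr fun K x y _ => ?_
  simp only [Finset.sum_sub_distrib, Finset.sum_add_distrib,
    sum_comp_add_one fun k => b (y k), sub_le_sub_iff_right]

lemma cyclicallyMonotone_setOf_tendsto {ι : Type*} {l : Filter ι} [l.NeBot] {φ : ι → X → ℝ}
    {ψ : ι → Y → ℝ} (h : ∀ i x y, φ i x + ψ i y ≤ c (x, y)) :
    CyclicallyMonotone c {z | Tendsto (fun i => φ i z.1 + ψ i z.2) l (𝓝 (c z))} := by
  intro K x y hxy
  refine le_of_tendsto' (tendsto_finsetSum Finset.univ fun k _ => hxy k) fun i => ?_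
  calc ∑ k, (φ i (x k) + ψ i (y k)) = ∑ k, (φ i (x k) + ψ i (y (k + 1))) := by
        simp only [Finset.sum_add_distrib, sum_comp_add_one fun k => ψ i (y k)]
    _ ≤ ∑ k, c (x k, y (k + 1)) := Finset.sum_le_sum fun k _ => h i _ _

/-- A chain in `Γ` with base point `z₀`, listed so that the base point comes last. -/
structure IsChainTo (Γ : Set (X × Y)) (z₀ : X × Y) {N : ℕ} (w : Fin (N + 1) → X × Y) : Prop where
  mem : ∀ k, w k ∈ Γ
  last : w (Fin.last N) = z₀

/-- The cost of re-matching each `x`-coordinate of a chain with the `y`-coordinate of its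
successor, minus the cost of the chain itself. The `y`-coordinate of `w 0` and the `x`-coordinate
of the base point stay unmatched. -/
def chainCost (c : X × Y → ℝ) {N : ℕ} (w : Fin (N + 1) → X × Y) : ℝ :=
  ∑ k : Fin N, c ((w k.castSucc).1, (w k.succ).2) - ∑ k, c (w k)

/-- Rüschendorf's potential: the least cost of a chain in `Γ` with base point `z₀`, plus a final
cost `d` of matching `t` with the free `y`-coordinate of the chain. -/
noncomputable def chainPotential {T : Type*} (c : X × Y → ℝ) (Γ : Set (X × Y)) (z₀ : X × Y)
    (d : T × Y → EReal) (t : T) : EReal :=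
  ⨅ (N : ℕ) (w : Fin (N + 1) → X × Y) (_ : IsChainTo Γ z₀ w), d (t, (w 0).2) + chainCost c w

/-- The chain potential on `X`, the first half of the dual pair. -/
noncomputable def leftPotential (c : X × Y → ℝ) (Γ : Set (X × Y)) (z₀ : X × Y) : X → EReal :=
  chainPotential c Γ z₀ fun z => c z

/-- The chain potential on `Y`, the negative of the second half of the dual pair: the final cost
is `0` on the diagonal and `⊤` elsewhere, so that only chains with free coordinate `y` count. -/
noncomputable def rightPotential (c : X × Y → ℝ) (Γ : Set (X × Y)) (z₀ : X × Y) : Y → EReal :=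
  chainPotential c Γ z₀ ((diagonal Y)ᶜ.indicator fun _ => ⊤)

section Chain

variable {z₀ : X × Y} {N : ℕ} {w : Fin (N + 1) → X × Y}

lemma IsChainTo.cons (hw : IsChainTo Γ z₀ w) {z : X × Y} (hz : z ∈ Γ) :
    IsChainTo Γ z₀ (Fin.cons z w : Fin (N + 2) → X × Y) where
  mem := Fin.cases hz hw.mem
  last := hw.last

lemma chainCost_cons (z : X × Y) :
    chainCost c (Fin.cons z w : Fin (N + 2) → X × Y) = c (z.1, (w 0).2) + chainCost c w - c z := by
  rw [chainCost, Fin.sum_univ_succ, Fin.sum_univ_succ (n := N + 1)]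
  simp only [chainCost, Fin.castSucc_zero, Fin.cons_zero, Fin.cons_succ, ← Fin.succ_castSucc]
  ring

lemma CyclicallyMonotone.add_chainCost_nonneg (h : CyclicallyMonotone c Γ)
    (hw : IsChainTo Γ z₀ w) : 0 ≤ c (z₀.1, (w 0).2) + chainCost c w := by
  have hcycle := h N (fun k => (w k).1) (fun k => (w k).2) hw.mem
  rw [Fin.sum_univ_castSucc (f := fun k => c ((w k).1, (w (k + 1)).2))] at hcycle
  simp only [Fin.coeSucc_eq_succ, Fin.last_add_one, hw.last, Prod.mk.eta] at hcycle
  rw [chainCost]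
  linarith

lemma leftPotential_le_of_isChainTo (hw : IsChainTo Γ z₀ w) (x : X) :
    leftPotential c Γ z₀ x ≤ (c (x, (w 0).2) + chainCost c w : ℝ) :=
  iInf_le_of_le N (iInf₂_le w hw)

lemma rightPotential_le_of_isChainTo (hw : IsChainTo Γ z₀ w) :
    rightPotential c Γ z₀ (w 0).2 ≤ chainCost c w :=
  (iInf_le_of_le N (iInf₂_le w hw)).trans (by simp)

lemma leftPotential_le_add_rightPotential (x : X) (y : Y) :
    leftPotential c Γ z₀ x ≤ c (x, y) + rightPotential c Γ z₀ y := by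
  rw [add_comm, ← EReal.sub_le_iff_le_add (by simp) (by simp)]
  refine le_iInf fun N => le_iInf₂ fun w hw => ?_
  rw [EReal.sub_le_iff_le_add (by simp) (by simp)]
  obtain rfl | hy := eq_or_ne y (w 0).2
  · simpa [add_comm] using leftPotential_le_of_isChainTo hw x
  · simp [hy]

lemma CyclicallyMonotone.le_leftPotential (h : CyclicallyMonotone c Γ) {z : X × Y} (hz : z ∈ Γ) :
    ((c z - c (z₀.1, z.2) : ℝ) : EReal) ≤ leftPotential c Γ z₀ z.1 := by
  refine le_iInf fun N => le_iInf₂ fun w hw => EReal.coe_le_coe_iff.2 ?_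
  have hcycle := h.add_chainCost_nonneg (hw.cons hz)
  rw [chainCost_cons, Fin.cons_zero] at hcycle
  linarith

lemma add_rightPotential_le_leftPotential {z : X × Y} (hz : z ∈ Γ) :
    c z + rightPotential c Γ z₀ z.2 ≤ leftPotential c Γ z₀ z.1 := by
  refine le_iInf fun N => le_iInf₂ fun w hw => ?_
  have hcons := rightPotential_le_of_isChainTo (c := c) (hw.cons hz)
  rw [chainCost_cons, Fin.cons_zero] at hcons
  refine (add_le_add_right hcons _).trans (EReal.coe_le_coe_iff.2 ?_)
  linarith

lemma CyclicallyMonotone.exists_potentials_eq_coe (h : CyclicallyMonotone c Γ) (hz₀ : z₀ ∈ Γ)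
    {z : X × Y} (hz : z ∈ Γ) :
    ∃ p q : ℝ, leftPotential c Γ z₀ z.1 = p ∧ rightPotential c Γ z₀ z.2 = q ∧ p - q = c z := by
  have hbot := h.le_leftPotential (z₀ := z₀) hz
  have htop : leftPotential c Γ z₀ z.1 ≤ _ :=
    leftPotential_le_of_isChainTo (w := fun _ : Fin 1 => z₀) ⟨fun _ => hz₀, rfl⟩ z.1
  have heq : c z + rightPotential c Γ z₀ z.2 = leftPotential c Γ z₀ z.1 :=
    (add_rightPotential_le_leftPotential hz).antisymm (leftPotential_le_add_rightPotential _ _)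
  lift leftPotential c Γ z₀ z.1 to ℝ using
    ⟨(htop.trans_lt (EReal.coe_lt_top _)).ne, ((EReal.bot_lt_coe _).trans_le hbot).ne'⟩ with p
  induction hq : rightPotential c Γ z₀ z.2 with
  | bot => simp [hq] at heq
  | top => simp [hq] at heq
  | coe q =>
    rw [hq, ← EReal.coe_add, EReal.coe_eq_coe_iff] at heq
    exact ⟨p, q, rfl, rfl, by linarith⟩

end Chain

end CyclicallyMonotone

section Measurability

lemma lowerSemicontinuous_iInf_of_compactSpace {T L R : Type*} [TopologicalSpace T]
    [TopologicalSpace L] [CompactSpace L] [CompleteLinearOrder R] [DenselyOrdered R]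
    {f : T → L → R} (hf : LowerSemicontinuous (Function.uncurry f)) :
    LowerSemicontinuous fun t => ⨅ l, f t l := by
  intro t r hr
  obtain ⟨r', hrr', hr'⟩ := exists_between hr
  have hlt : ∀ᶠ s in 𝓝 t, ∀ l ∈ univ, r' < f s l :=
    isCompact_univ.eventually_forall_of_forall_eventually fun l _ =>
      hf (t, l) r' (hr'.trans_le (iInf_le _ l))
  filter_upwards [hlt] with s hs
  exact hrr'.trans_le (le_iInf fun l => (hs l trivial).le)

variable {T X Y : Type*} {c : X × Y → ℝ}

lemma chainPotential_iUnion (K : ℕ → Set (X × Y)) (z₀ : X × Y) (d : T × Y → EReal) (t : T) :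
    chainPotential c (⋃ n, K n) z₀ d t =
      ⨅ (N : ℕ) (n : Fin (N + 1) → ℕ) (w : {w : ∀ k, K (n k) // (w (Fin.last N) : X × Y) = z₀}),
        d (t, (w.1 0 : X × Y).2) + chainCost c fun k => (w.1 k : X × Y) := by
  refine iInf_congr fun N => le_antisymm ?_ ?_
  · refine le_iInf fun n => le_iInf fun w => iInf₂_le (fun k => (w.1 k : X × Y)) ⟨fun k => ?_, w.2⟩
    exact mem_iUnion_of_mem _ (w.1 k).2
  · refine le_iInf₂ fun w hw => ?_
    choose n hn using fun k => mem_iUnion.1 (hw.mem k)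
    exact iInf_le_of_le n (iInf_le_of_le ⟨fun k => ⟨w k, hn k⟩, hw.last⟩ le_rfl)

variable [TopologicalSpace T] [TopologicalSpace X] [TopologicalSpace Y]

lemma lowerSemicontinuous_chainCost (hc : LowerSemicontinuous c) {N : ℕ}
    (K : Fin (N + 1) → Set (X × Y)) (hcK : ∀ k, ContinuousOn c (K k)) :
    LowerSemicontinuous fun w : ∀ k, K k => chainCost c fun k => (w k : X × Y) := by
  simp only [chainCost, sub_eq_add_neg]
  refine LowerSemicontinuous.add ?_ (Continuous.lowerSemicontinuous ?_)
  · refine lowerSemicontinuous_sum fun k _ => hc.comp (g := fun w : ∀ k, K k =>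
      ((w k.castSucc : X × Y).1, (w k.succ : X × Y).2)) ?_
    fun_prop
  · exact (continuous_finsetSum _ fun k _ =>
      (continuousOn_iff_continuous_domRestrict.1 (hcK k)).comp (continuous_apply k)).neg

lemma measurable_chainPotential [MeasurableSpace T] [BorelSpace T] [T2Space X] [T2Space Y]
    (hc : LowerSemicontinuous c) {K : ℕ → Set (X × Y)} (hK : ∀ n, IsCompact (K n))
    (hcK : ∀ n, ContinuousOn c (K n)) (z₀ : X × Y) {d : T × Y → EReal}
    (hd : LowerSemicontinuous d) : Measurable (chainPotential c (⋃ n, K n) z₀ d) := by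
  simp only [funext fun t => chainPotential_iUnion (c := c) K z₀ d t]
  refine Measurable.iInf fun N => Measurable.iInf fun n => LowerSemicontinuous.measurable ?_
  have : ∀ k, CompactSpace (K (n k)) := fun k => isCompact_iff_compactSpace.1 (hK _)
  have : CompactSpace {w : ∀ k, K (n k) // (w (Fin.last N) : X × Y) = z₀} :=
    isCompact_iff_compactSpace.1 (isClosed_eq (by fun_prop) continuous_const).isCompact
  refine lowerSemicontinuous_iInf_of_compactSpace (LowerSemicontinuous.add' ?_ ?_ fun _ =>
    EReal.continuousAt_add (Or.inr (EReal.coe_ne_bot _)) (Or.inr (EReal.coe_ne_top _)))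
  · refine hd.comp (g := fun p : T × {w : ∀ k, K (n k) // (w (Fin.last N) : X × Y) = z₀} =>
      (p.1, (p.2.1 0 : X × Y).2)) (continuous_fst.prodMk ?_)
    exact continuous_snd.comp (continuous_subtype_val.comp
      ((continuous_apply 0).comp (continuous_subtype_val.comp continuous_snd)))
  · refine continuous_coe_real_ereal.comp_lowerSemicontinuous ?_ EReal.coe_strictMono.monotone
    exact (lowerSemicontinuous_chainCost hc _ fun k => hcK (n k)).comp
      (continuous_subtype_val.comp continuous_snd)

variable [T2Space X] [T2Space Y]

lemma measurable_leftPotential [MeasurableSpace X] [BorelSpace X] (hc : LowerSemicontinuous c)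
    {K : ℕ → Set (X × Y)} (hK : ∀ n, IsCompact (K n)) (hcK : ∀ n, ContinuousOn c (K n))
    (z₀ : X × Y) : Measurable (leftPotential c (⋃ n, K n) z₀) :=
  measurable_chainPotential hc hK hcK z₀
    (continuous_coe_real_ereal.comp_lowerSemicontinuous hc EReal.coe_strictMono.monotone)

lemma measurable_rightPotential [MeasurableSpace Y] [BorelSpace Y] (hc : LowerSemicontinuous c)
    {K : ℕ → Set (X × Y)} (hK : ∀ n, IsCompact (K n)) (hcK : ∀ n, ContinuousOn c (K n))
    (z₀ : X × Y) : Measurable (rightPotential c (⋃ n, K n) z₀) :=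
  measurable_chainPotential hc hK hcK z₀
    (isClosed_diagonal.isOpen_compl.lowerSemicontinuous_indicator le_top)

end Measurability

section Truncation

/-- Truncation of extended reals to `[-n, n]`, which turns the chain potentials into bounded
functions. -/
noncomputable def truncate (n : ℕ) (e : EReal) : ℝ := (max (-n : ℝ) (min (n : ℝ) e) : EReal).toReal

variable (n : ℕ)

lemma measurable_truncate : Measurable (truncate n) := by
  unfold truncate
  fun_prop

lemma truncate_coe (r : ℝ) : truncate n r = max (-n : ℝ) (min (n : ℝ) r) := by
  rw [truncate, ← EReal.coe_strictMono.monotone.map_min, ← EReal.coe_strictMono.monotone.map_max,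
    EReal.toReal_coe]

lemma truncate_bot : truncate n ⊥ = -n := by
  rw [truncate, min_eq_right bot_le, max_eq_left bot_le, EReal.toReal_coe]

lemma truncate_top : truncate n ⊤ = n := by
  have hn : ((-n : ℝ) : EReal) ≤ (n : ℝ) := EReal.coe_le_coe_iff.2 (neg_le_self n.cast_nonneg)
  rw [truncate, min_eq_left le_top, max_eq_right hn, EReal.toReal_coe]

lemma abs_truncate_le (e : EReal) : |truncate n e| ≤ n := by
  induction e with
  | bot => simp [truncate_bot]
  | top => simp [truncate_top]
  | coe r => simp [truncate_coe, abs_le]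

lemma truncate_sub_truncate_le {n : ℕ} {p q : EReal} {r : ℝ} (hr : 0 ≤ r) (h : p ≤ r + q) :
    truncate n p - truncate n q ≤ r := by
  have hp := abs_le.1 (abs_truncate_le n p)
  have hq := abs_le.1 (abs_truncate_le n q)
  induction q with
  | bot => simp_all
  | top => rw [truncate_top]; linarith
  | coe q =>
    induction p with
    | bot => rw [truncate_bot]; linarith
    | top => exact absurd (top_le_iff.1 h) (EReal.coe_ne_top _)
    | coe p =>
      norm_cast at h
      rw [truncate_coe, truncate_coe]
      grind

lemma tendsto_truncate_coe (r : ℝ) : Tendsto (fun n => truncate n r) atTop (𝓝 r) := by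
  refine tendsto_const_nhds.congr' ?_
  filter_upwards [tendsto_natCast_atTop_atTop.eventually_ge_atTop |r|] with n hn
  obtain ⟨hl, hu⟩ := abs_le.1 hn
  rw [truncate_coe, min_eq_right hu, max_eq_right hl]

variable {X Y : Type*} {c : X × Y → ℝ} {Γ : Set (X × Y)} {z₀ z : X × Y}

lemma CyclicallyMonotone.truncate_rightPotential_le (h : CyclicallyMonotone c Γ) (hz₀ : z₀ ∈ Γ)
    (hz : z ∈ Γ) (h0 : 0 ≤ c z) :
    truncate n (rightPotential c Γ z₀ z.2) ≤ truncate n (leftPotential c Γ z₀ z.1) := by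
  obtain ⟨p, q, hp, hq, hpq⟩ := h.exists_potentials_eq_coe hz₀ hz
  rw [hp, hq, truncate_coe, truncate_coe]
  gcongr
  linarith

lemma CyclicallyMonotone.tendsto_truncate_sub_truncate (h : CyclicallyMonotone c Γ) (hz₀ : z₀ ∈ Γ)
    (hz : z ∈ Γ) :
    Tendsto (fun n => truncate n (leftPotential c Γ z₀ z.1) +
      -truncate n (rightPotential c Γ z₀ z.2)) atTop (𝓝 (c z)) := by
  obtain ⟨p, q, hp, hq, hpq⟩ := h.exists_potentials_eq_coe hz₀ hz
  rw [hp, hq, ← hpq, sub_eq_add_neg]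
  exact (tendsto_truncate_coe p).add (tendsto_truncate_coe q).neg

end Truncation

section Duality

variable {X Y : Type*} [MeasurableSpace X] [MeasurableSpace Y] {c : X × Y → ℝ}
  {π : Measure (X × Y)} {μ : Measure X} {ν : Measure Y} {φ : X → ℝ} {ψ : Y → ℝ}

lemma IsCoupling.integrable_add (hπ : IsCoupling π μ ν) (hφ : Integrable φ μ)
    (hψ : Integrable ψ ν) : Integrable (fun z => φ z.1 + ψ z.2) π := by
  obtain ⟨rfl, rfl⟩ := hπ
  exact (hφ.comp_measurable measurable_fst).add (hψ.comp_measurable measurable_snd)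

lemma IsCoupling.integral_add (hπ : IsCoupling π μ ν) (hφ : Integrable φ μ)
    (hψ : Integrable ψ ν) : ∫ z, (φ z.1 + ψ z.2) ∂π = ∫ x, φ x ∂μ + ∫ y, ψ y ∂ν := by
  obtain ⟨rfl, rfl⟩ := hπ
  have hφ' : Integrable (fun z : X × Y => φ z.1) π := hφ.comp_measurable measurable_fst
  have hψ' : Integrable (fun z : X × Y => ψ z.2) π := hψ.comp_measurable measurable_snd
  rw [MeasureTheory.integral_add hφ' hψ',
    integral_map measurable_fst.aemeasurable hφ.aestronglyMeasurable,
    integral_map measurable_snd.aemeasurable hψ.aestronglyMeasurable]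

lemma IsCoupling.integrable_sub_iff (hπ : IsCoupling π μ ν) (hφ : Integrable φ μ)
    (hψ : Integrable ψ ν) : Integrable (fun z => c z - (φ z.1 + ψ z.2)) π ↔ Integrable c π := by
  refine ⟨fun h => ?_, fun h => h.sub (hπ.integrable_add hφ hψ)⟩
  exact (h.add (hπ.integrable_add hφ hψ)).congr (.of_forall fun z => by simp)

lemma IsCoupling.integral_sub (hπ : IsCoupling π μ ν) (hφ : Integrable φ μ)
    (hψ : Integrable ψ ν) (hc : Integrable c π) :
    ∫ z, (c z - (φ z.1 + ψ z.2)) ∂π = ∫ z, c z ∂π - (∫ x, φ x ∂μ + ∫ y, ψ y ∂ν) := by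
  rw [MeasureTheory.integral_sub hc (hπ.integrable_add hφ hψ), hπ.integral_add hφ hψ]

lemma IsCoupling.isProbabilityMeasure [IsProbabilityMeasure μ] (hπ : IsCoupling π μ ν) :
    IsProbabilityMeasure π := by
  obtain ⟨rfl, -⟩ := hπ
  exact Measure.isProbabilityMeasure_of_map Prod.fst

/-- `π` is an optimal transport plan between its own marginals; competitors of infinite cost are
disregarded. -/
def IsOptimalPlan (c : X × Y → ℝ) (π : Measure (X × Y)) : Prop :=
  ∀ π', IsCoupling π' π.fst π.snd → Integrable c π' → ∫ z, c z ∂π ≤ ∫ z, c z ∂π'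

/-- A feasible pair for the dual of the transport problem. -/
structure IsDualPair (c : X × Y → ℝ) (μ : Measure X) (ν : Measure Y) (φ : X → ℝ) (ψ : Y → ℝ) :
    Prop where
  measurable_left : Measurable φ
  measurable_right : Measurable ψ
  integrable_left : Integrable φ μ
  integrable_right : Integrable ψ ν
  add_le : ∀ x y, φ x + ψ y ≤ c (x, y)

/-- The cost of `π` is approximated from below by the values of dual pairs. -/
def HasNoDualityGap (c : X × Y → ℝ) (π : Measure (X × Y)) : Prop :=
  ∀ ε > 0, ∃ φ ψ, IsDualPair c π.fst π.snd φ ψ ∧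
    ∫ z, c z ∂π - ε < ∫ x, φ x ∂π.fst + ∫ y, ψ y ∂π.snd

lemma isCoupling_fst_snd (π : Measure (X × Y)) : IsCoupling π π.fst π.snd := ⟨rfl, rfl⟩

lemma IsCoupling.integral_add_integral_le (hπ : IsCoupling π μ ν) (hφ : Integrable φ μ)
    (hψ : Integrable ψ ν) (h : ∀ x y, φ x + ψ y ≤ c (x, y)) (hc : Integrable c π) :
    ∫ x, φ x ∂μ + ∫ y, ψ y ∂ν ≤ ∫ z, c z ∂π := by
  rw [← hπ.integral_add hφ hψ]
  exact integral_mono (hπ.integrable_add hφ hψ) hc fun z => h z.1 z.2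

lemma HasNoDualityGap.isOptimalPlan (h : HasNoDualityGap c π) : IsOptimalPlan c π := by
  intro π' hπ' hc
  refine le_of_forall_sub_le fun ε hε => ?_
  obtain ⟨φ, ψ, hφψ, hlt⟩ := h ε hε
  exact hlt.le.trans (hπ'.integral_add_integral_le hφψ.integrable_left hφψ.integrable_right
    hφψ.add_le hc)

/-- Along a maximizing sequence of dual pairs the nonnegative gaps `c - (φ n ⊕ ψ n)` tend to `0`
in `L¹`, hence almost everywhere along a subsequence. -/
lemma HasNoDualityGap.exists_seq_tendsto_ae (hc : Measurable c) (hint : Integrable c π)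
    (h : HasNoDualityGap c π) :
    ∃ φ : ℕ → X → ℝ, ∃ ψ : ℕ → Y → ℝ, (∀ n, IsDualPair c π.fst π.snd (φ n) (ψ n)) ∧
      ∀ᵐ z ∂π, Tendsto (fun n => φ n z.1 + ψ n z.2) atTop (𝓝 (c z)) := by
  choose φ ψ hpair hlt using fun n : ℕ => h (1 / ((n : ℝ) + 1)) Nat.one_div_pos_of_nat
  let f (n : ℕ) (z : X × Y) : ℝ := φ n z.1 + ψ n z.2
  have hfm (n : ℕ) : Measurable (f n) :=
    ((hpair n).measurable_left.comp measurable_fst).add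
      ((hpair n).measurable_right.comp measurable_snd)
  have hfi (n : ℕ) : Integrable (f n) π :=
    (isCoupling_fst_snd π).integrable_add (hpair n).integrable_left (hpair n).integrable_right
  have hnorm (n : ℕ) (z : X × Y) : ‖f n z - c z‖ = c z - f n z := by
    rw [norm_sub_rev, Real.norm_of_nonneg (sub_nonneg.2 ((hpair n).add_le z.1 z.2))]
  have hgap (n : ℕ) : ∫ z, ‖f n z - c z‖ ∂π ≤ 1 / ((n : ℝ) + 1) := by
    simp only [hnorm]
    rw [(isCoupling_fst_snd π).integral_sub (hpair n).integrable_left (hpair n).integrable_right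
      hint]
    linarith [hlt n]
  have hL1 : Tendsto (fun n => eLpNorm (f n - c) 1 π) atTop (𝓝 0) := by
    have hbound (n : ℕ) : eLpNorm (f n - c) 1 π ≤ ENNReal.ofReal (1 / ((n : ℝ) + 1)) := by
      rw [eLpNorm_one_eq_lintegral_enorm,
        ← ofReal_integral_norm_eq_lintegral_enorm ((hfi n).sub hint)]
      exact ENNReal.ofReal_le_ofReal (hgap n)
    refine tendsto_of_tendsto_of_tendsto_of_le_of_le tendsto_const_nhds ?_ (fun _ => zero_le) hbound
    simpa using ENNReal.tendsto_ofReal (tendsto_one_div_add_atTop_nhds_zero_nat (𝕜 := ℝ))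
  obtain ⟨ns, -, hns⟩ := (tendstoInMeasure_of_tendsto_eLpNorm one_ne_zero
    (fun n => (hfm n).aestronglyMeasurable) hc.aestronglyMeasurable hL1).exists_seq_tendsto_ae
  exact ⟨fun n => φ (ns n), fun n => ψ (ns n), fun n => hpair (ns n), hns⟩

lemma HasNoDualityGap.exists_cyclicallyMonotone (hc : Measurable c) (hint : Integrable c π)
    (h : HasNoDualityGap c π) :
    ∃ Γ : Set (X × Y), MeasurableSet Γ ∧ CyclicallyMonotone c Γ ∧ π Γᶜ = 0 := by
  obtain ⟨φ, ψ, hpair, hlim⟩ := h.exists_seq_tendsto_ae hc hint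
  refine ⟨{z | Tendsto (fun n => φ n z.1 + ψ n z.2) atTop (𝓝 (c z))}, ?_,
    cyclicallyMonotone_setOf_tendsto fun n => (hpair n).add_le, hlim⟩
  exact measurableSet_tendsto_fun (fun n => ((hpair n).measurable_left.comp measurable_fst).add
    ((hpair n).measurable_right.comp measurable_snd)) hc

end Duality

section NoDualityGap

variable {X Y : Type*} [MeasurableSpace X] [TopologicalSpace X] [BorelSpace X]
  [MeasurableSpace Y] [TopologicalSpace Y] [BorelSpace Y] {c : X × Y → ℝ} {π : Measure (X × Y)}

section Hausdorff

variable [T2Space X] [T2Space Y] {K : ℕ → Set (X × Y)}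

lemma isDualPair_truncate [IsFiniteMeasure π] (hc : LowerSemicontinuous c) (h0 : ∀ z, 0 ≤ c z)
    (hK : ∀ n, IsCompact (K n)) (hcK : ∀ n, ContinuousOn c (K n)) (z₀ : X × Y) (n : ℕ) :
    IsDualPair c π.fst π.snd (fun x => truncate n (leftPotential c (⋃ n, K n) z₀ x))
      fun y => -truncate n (rightPotential c (⋃ n, K n) z₀ y) := by
  have hφ := (measurable_truncate n).comp (measurable_leftPotential hc hK hcK z₀)
  have hψ := ((measurable_truncate n).comp (measurable_rightPotential hc hK hcK z₀)).neg
  refine ⟨hφ, hψ, ?_, ?_, fun x y => ?_⟩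
  · exact .of_bound hφ.aestronglyMeasurable n (.of_forall fun x => abs_truncate_le n _)
  · refine .of_bound hψ.aestronglyMeasurable n (.of_forall fun y => ?_)
    exact (norm_neg _).trans_le (abs_truncate_le n _)
  · exact truncate_sub_truncate_le (h0 _) (leftPotential_le_add_rightPotential x y)

lemma CyclicallyMonotone.hasNoDualityGap_of_continuousOn [NeZero π] [IsFiniteMeasure π]
    (hc : LowerSemicontinuous c) (h0 : ∀ z, 0 ≤ c z) (hint : Integrable c π)
    (hK : ∀ n, IsCompact (K n)) (hcK : ∀ n, ContinuousOn c (K n))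
    (h : CyclicallyMonotone c (⋃ n, K n)) (hπ : ∀ᵐ z ∂π, z ∈ ⋃ n, K n) :
    HasNoDualityGap c π := by
  intro ε hε
  obtain ⟨z₀, hz₀⟩ := hπ.exists
  have hpair := isDualPair_truncate (π := π) hc h0 hK hcK z₀
  have hlim : Tendsto (fun n => ∫ z, (truncate n (leftPotential c (⋃ n, K n) z₀ z.1) +
      -truncate n (rightPotential c (⋃ n, K n) z₀ z.2)) ∂π) atTop (𝓝 (∫ z, c z ∂π)) := by
    refine tendsto_integral_of_dominated_convergence c (fun n => ?_) hint (fun n => ?_) ?_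
    · exact (((hpair n).measurable_left.comp measurable_fst).add
        ((hpair n).measurable_right.comp measurable_snd)).aestronglyMeasurable
    · filter_upwards [hπ] with z hz
      rw [Real.norm_of_nonneg]
      · exact (hpair n).add_le z.1 z.2
      · exact le_add_neg_iff_le.2 (h.truncate_rightPotential_le n hz₀ hz (h0 z))
    · filter_upwards [hπ] with z hz using h.tendsto_truncate_sub_truncate hz₀ hz
  obtain ⟨n, hn⟩ := (hlim.eventually (lt_mem_nhds (sub_lt_self _ hε))).exists
  refine ⟨_, _, hpair n, ?_⟩
  rwa [(isCoupling_fst_snd π).integral_add (hpair n).integrable_left (hpair n).integrable_right]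
    at hn

end Hausdorff

lemma CyclicallyMonotone.hasNoDualityGap [PolishSpace X] [PolishSpace Y] [NeZero π]
    [IsFiniteMeasure π] (hc : LowerSemicontinuous c) (h0 : ∀ z, 0 ≤ c z) (hint : Integrable c π)
    {Γ : Set (X × Y)} (h : CyclicallyMonotone c Γ) (hΓ : MeasurableSet Γ) (hπ : π Γᶜ = 0) :
    HasNoDualityGap c π := by
  obtain ⟨K, hKΓ, hK, hcK, hK0⟩ :=
    exists_seq_isCompact_continuousOn_sdiff_iUnion_eq_zero π hc.measurable hΓ
  refine (h.mono (iUnion_subset hKΓ)).hasNoDualityGap_of_continuousOn hc h0 hint hK hcK ?_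
  filter_upwards [measure_eq_zero_iff_ae_notMem.1 hπ, measure_eq_zero_iff_ae_notMem.1 hK0]
    with z hz hzK
  exact by_contra fun hn => hzK ⟨not_not.1 hz, hn⟩

end NoDualityGap

section Rerouting

variable {X Y : Type*} [MeasurableSpace X] [MeasurableSpace Y] {c : X × Y → ℝ}
  {π ρ : Measure (X × Y)}

lemma IsOptimalPlan.mono [IsFiniteMeasure ρ] (h : IsOptimalPlan c π) (hint : Integrable c π)
    (hρ : ρ ≤ π) : IsOptimalPlan c ρ := by
  intro σ hσ hσc
  have hsplit : π - ρ + ρ = π := Measure.sub_add_cancel_of_le hρ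
  have hrest : Integrable c (π - ρ) := hint.mono_measure Measure.sub_le
  have hcoupling : IsCoupling (π - ρ + σ) π.fst π.snd := by
    constructor
    · rw [Measure.map_add _ _ measurable_fst, hσ.1, ← Measure.fst, ← Measure.fst_add, hsplit]
    · rw [Measure.map_add _ _ measurable_snd, hσ.2, ← Measure.snd, ← Measure.snd_add, hsplit]
  refine le_of_add_le_add_left (a := ∫ z, c z ∂(π - ρ)) ?_
  rw [← integral_add_measure hrest (hint.mono_measure hρ), hsplit,
    ← integral_add_measure hrest hσc]
  exact h _ hcoupling (hrest.add_measure hσc)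

lemma IsOptimalPlan.smul (h : IsOptimalPlan c π) {r : ENNReal} (h0 : r ≠ 0) (htop : r ≠ ⊤) :
    IsOptimalPlan c (r • π) := by
  intro σ hσ hσc
  have hcoupling : IsCoupling (r⁻¹ • σ) π.fst π.snd := by
    constructor
    · rw [Measure.map_smul, hσ.1, Measure.fst, Measure.map_smul, smul_smul,
        ENNReal.inv_mul_cancel h0 htop, one_smul, Measure.fst]
    · rw [Measure.map_smul, hσ.2, Measure.snd, Measure.map_smul, smul_smul,
        ENNReal.inv_mul_cancel h0 htop, one_smul, Measure.snd]
  have hle := h _ hcoupling (hσc.smul_measure (ENNReal.inv_ne_top.2 h0))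
  rw [integral_smul_measure, ENNReal.toReal_inv, smul_eq_mul,
    le_inv_mul_iff₀ (ENNReal.toReal_pos h0 htop)] at hle
  rwa [integral_smul_measure]

variable {ι : Type*} [Fintype ι]

lemma fst_sum (m : ι → Measure (X × Y)) : (∑ i, m i).fst = ∑ i, (m i).fst :=
  Measure.map_finset_sum' measurable_fst.aemeasurable

lemma snd_sum (m : ι → Measure (X × Y)) : (∑ i, m i).snd = ∑ i, (m i).snd :=
  Measure.map_finset_sum' measurable_snd.aemeasurable

lemma IsOptimalPlan.sum_integral_cond_le [IsFiniteMeasure π] (h : IsOptimalPlan c π)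
    (hint : Integrable c π) {K : ℕ} {A : Fin (K + 1) → Set (X × Y)} (hA : ∀ k, π (A k) ≠ 0)
    (hprod : ∀ k, Integrable c (π[|A k].fst.prod π[|A (k + 1)].snd)) :
    ∑ k, ∫ z, c z ∂π[|A k] ≤ ∑ k, ∫ z, c z ∂(π[|A k].fst.prod π[|A (k + 1)].snd) := by
  have (k : Fin (K + 1)) : IsProbabilityMeasure π[|A k] := cond_isProbabilityMeasure (hA k)
  have hle : ∑ k, π[|A k] ≤ (∑ k, (π (A k))⁻¹) • π := by
    rw [Finset.sum_smul]
    exact Finset.sum_le_sum fun k _ => by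
      rw [ProbabilityTheory.cond]; gcongr; exact Measure.restrict_le_self
  have hopt : IsOptimalPlan c (∑ k, π[|A k]) := by
    refine (h.smul ?_ ?_).mono (hint.smul_measure ?_) hle
    all_goals simp [hA]
  have hcoupling : IsCoupling (∑ k, π[|A k].fst.prod π[|A (k + 1)].snd) (∑ k, π[|A k]).fst
      (∑ k, π[|A k]).snd := by
    constructor
    · exact (fst_sum _).trans (by simp only [fst_sum, Measure.fst_prod])
    · exact (snd_sum _).trans (by
        simp only [snd_sum, Measure.snd_prod, sum_comp_add_one fun k => π[|A k].snd])
  have hcond (k : Fin (K + 1)) : Integrable c π[|A k] :=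
    (hint.mono_measure Measure.restrict_le_self).smul_measure (by simp [hA])
  have hle' := hopt _ hcoupling (integrable_finsetSum_measure.2 fun k _ => hprod k)
  rwa [integral_finsetSum_measure fun k _ => hcond k,
    integral_finsetSum_measure fun k _ => hprod k] at hle'

end Rerouting

section Support

lemma exists_isOpen_prod_abs_sub_lt {X Y ι κ : Type*} [TopologicalSpace X] [TopologicalSpace Y]
    [Finite ι] [Finite κ] {f : X × Y → ℝ} (hf : Continuous f) (x : ι → X) (y : κ → Y) {δ : ℝ}
    (hδ : 0 < δ) :
    ∃ (U : ι → Set X) (V : κ → Set Y), (∀ i, IsOpen (U i) ∧ x i ∈ U i) ∧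
      (∀ j, IsOpen (V j) ∧ y j ∈ V j) ∧
      ∀ i j, ∀ z ∈ U i ×ˢ V j, |f z - f (x i, y j)| < δ := by
  have hopen (i : ι) (j : κ) : IsOpen {z | |f z - f (x i, y j)| < δ} :=
    isOpen_lt (hf.sub continuous_const).abs continuous_const
  choose U V hU hV hxU hyV hUV using fun i j =>
    isOpen_prod_iff.1 (hopen i j) (x i) (y j) (by simpa using hδ)
  refine ⟨fun i => ⋂ j, U i j, fun j => ⋂ i, V i j, fun i => ?_, fun j => ?_, fun i j z hz => ?_⟩
  · exact ⟨isOpen_iInter_of_finite (hU i), mem_iInter.2 (hxU i)⟩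
  · exact ⟨isOpen_iInter_of_finite fun i => hV i j, mem_iInter.2 fun i => hyV i j⟩
  · exact hUV i j ⟨mem_iInter.1 hz.1 j, mem_iInter.1 hz.2 i⟩

lemma abs_integral_sub_le_of_ae {Z : Type*} [MeasurableSpace Z] {ρ : Measure Z}
    [IsProbabilityMeasure ρ] {f : Z → ℝ} (hf : Integrable f ρ) {r δ : ℝ}
    (h : ∀ᵐ z ∂ρ, |f z - r| < δ) : |∫ z, f z ∂ρ - r| ≤ δ := by
  have hnorm := norm_integral_le_of_norm_le_const (μ := ρ) (f := fun z => f z - r)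
    (h.mono fun z hz => hz.le)
  rwa [integral_sub hf (integrable_const r), integral_const, probReal_univ, one_smul,
    mul_one] at hnorm

lemma ae_prod_fst_cond_snd_cond {X Y : Type*} [MeasurableSpace X] [MeasurableSpace Y]
    {π : Measure (X × Y)} {U U' : Set X} {V V' : Set Y}
    (hU : MeasurableSet U) (hV : MeasurableSet V) (hU' : MeasurableSet U')
    (hV' : MeasurableSet V') :
    ∀ᵐ z ∂π[|U ×ˢ V].fst.prod π[|U' ×ˢ V'].snd, z ∈ U ×ˢ V' := by
  have hfst : ∀ᵐ x ∂π[|U ×ˢ V].fst, x ∈ U :=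
    (ae_map_iff measurable_fst.aemeasurable hU).2 ((ae_cond_mem (hU.prod hV)).mono fun z hz => hz.1)
  have hsnd : ∀ᵐ y ∂π[|U' ×ˢ V'].snd, y ∈ V' :=
    (ae_map_iff measurable_snd.aemeasurable hV').2
      ((ae_cond_mem (hU'.prod hV')).mono fun z hz => hz.2)
  exact (Measure.quasiMeasurePreserving_fst.ae hfst).and
    (Measure.quasiMeasurePreserving_snd.ae hsnd)

variable {X Y : Type*} [MeasurableSpace X] [TopologicalSpace X] [MeasurableSpace Y]
  [TopologicalSpace Y] [OpensMeasurableSpace (X × Y)] {π : Measure (X × Y)} [IsFiniteMeasure π]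
  {f : X × Y →ᵇ ℝ}

lemma IsOptimalPlan.sum_le_sum_add_of_abs_sub_lt (h : IsOptimalPlan f π) {K : ℕ}
    {x : Fin (K + 1) → X} {y : Fin (K + 1) → Y} {U : Fin (K + 1) → Set X}
    {V : Fin (K + 1) → Set Y} {δ : ℝ} (hU : ∀ k, MeasurableSet (U k))
    (hV : ∀ k, MeasurableSet (V k)) (hpos : ∀ k, π (U k ×ˢ V k) ≠ 0)
    (hUV : ∀ i j, ∀ z ∈ U i ×ˢ V j, |f z - f (x i, y j)| < δ) :
    ∑ k, f (x k, y k) ≤ ∑ k, f (x k, y (k + 1)) + (K + 1) * (2 * δ) := by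
  have (k : Fin (K + 1)) : IsProbabilityMeasure π[|U k ×ˢ V k] :=
    cond_isProbabilityMeasure (hpos k)
  have hdiag (k : Fin (K + 1)) : f (x k, y k) ≤ ∫ z, f z ∂π[|U k ×ˢ V k] + δ := by
    have hae := (ae_cond_mem (μ := π) ((hU k).prod (hV k))).mono (hUV k k)
    linarith [abs_le.1 (abs_integral_sub_le_of_ae (f.integrable _) hae)]
  have hshift (k : Fin (K + 1)) :
      ∫ z, f z ∂(π[|U k ×ˢ V k].fst.prod π[|U (k + 1) ×ˢ V (k + 1)].snd) ≤
        f (x k, y (k + 1)) + δ := by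
    have hae := (ae_prod_fst_cond_snd_cond (π := π) (hU k) (hV k) (hU (k + 1))
      (hV (k + 1))).mono (hUV k (k + 1))
    linarith [abs_le.1 (abs_integral_sub_le_of_ae (f.integrable _) hae)]
  have hreroute := h.sum_integral_cond_le (f.integrable π) hpos fun k => f.integrable _
  have hdiag' := Finset.sum_le_sum fun k (_ : k ∈ Finset.univ) => hdiag k
  have hshift' := Finset.sum_le_sum fun k (_ : k ∈ Finset.univ) => hshift k
  simp only [Finset.sum_add_distrib, Finset.sum_const, Finset.card_univ, Fintype.card_fin,
    nsmul_eq_mul, Nat.cast_add, Nat.cast_one] at hdiag' hshift'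
  linarith

lemma IsOptimalPlan.cyclicallyMonotone_support [OpensMeasurableSpace X] [OpensMeasurableSpace Y]
    (h : IsOptimalPlan f π) : CyclicallyMonotone f π.support := by
  intro K x y hxy
  refine le_of_forall_pos_le_add fun ε hε => ?_
  have hδ : 0 < ε / (2 * (K + 1)) := by positivity
  obtain ⟨U, V, hU, hV, hUV⟩ := exists_isOpen_prod_abs_sub_lt f.continuous x y hδ
  have hpos (k : Fin (K + 1)) : π (U k ×ˢ V k) ≠ 0 :=
    ((Measure.mem_support_iff_forall _).1 (hxy k) _
      (((hU k).1.prod (hV k).1).mem_nhds ⟨(hU k).2, (hV k).2⟩)).ne'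
  have hle := h.sum_le_sum_add_of_abs_sub_lt (fun k => (hU k).1.measurableSet)
    (fun k => (hV k).1.measurableSet) hpos hUV
  rwa [show ((K : ℝ) + 1) * (2 * (ε / (2 * (K + 1)))) = ε by field_simp] at hle

end Support

section Approximation

variable {Z : Type*} {c : Z → ℝ}

/-- The Lipschitz regularization (Moreau–Yosida or Pasch–Hausdorff envelope) of `min c n`: the
largest `n`-Lipschitz function below it. -/
noncomputable def lipschitzEnvelope [PseudoMetricSpace Z] (c : Z → ℝ) (n : ℕ) (z : Z) : ℝ :=
  ⨅ w, min (c w) n + n * dist z w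

section PseudoMetricSpace

variable [PseudoMetricSpace Z]

lemma min_add_mul_dist_nonneg (h0 : ∀ z, 0 ≤ c z) (n : ℕ) (z w : Z) :
    0 ≤ min (c w) n + n * dist z w :=
  add_nonneg (le_min (h0 w) n.cast_nonneg) (by positivity)

lemma lipschitzEnvelope_nonneg (h0 : ∀ z, 0 ≤ c z) (n : ℕ) (z : Z) : 0 ≤ lipschitzEnvelope c n z :=
  Real.iInf_nonneg (min_add_mul_dist_nonneg h0 n z)

lemma lipschitzEnvelope_le_add (h0 : ∀ z, 0 ≤ c z) (n : ℕ) (z w : Z) :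
    lipschitzEnvelope c n z ≤ min (c w) n + n * dist z w :=
  ciInf_le ⟨0, forall_mem_range.2 (min_add_mul_dist_nonneg h0 n z)⟩ w

lemma lipschitzEnvelope_le_min (h0 : ∀ z, 0 ≤ c z) (n : ℕ) (z : Z) :
    lipschitzEnvelope c n z ≤ min (c z) n := by
  simpa using lipschitzEnvelope_le_add h0 n z z

lemma monotone_lipschitzEnvelope (h0 : ∀ z, 0 ≤ c z) : Monotone (lipschitzEnvelope c) := by
  intro n m hnm z
  have : Nonempty Z := ⟨z⟩
  refine le_ciInf fun w => (lipschitzEnvelope_le_add h0 n z w).trans ?_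
  gcongr

lemma lipschitzWith_lipschitzEnvelope (h0 : ∀ z, 0 ≤ c z) (n : ℕ) :
    LipschitzWith n (lipschitzEnvelope c n) := by
  refine LipschitzWith.of_le_add_mul _ fun z z' => sub_le_iff_le_add.1 ?_
  have : Nonempty Z := ⟨z⟩
  refine le_ciInf fun w => sub_le_iff_le_add.2 ?_
  calc lipschitzEnvelope c n z ≤ min (c w) n + n * dist z w := lipschitzEnvelope_le_add h0 n z w
    _ ≤ min (c w) n + n * (dist z z' + dist z' w) := by
      gcongr
      exact dist_triangle z z' w
    _ = _ := by simp; ring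

/-- Far from `z` the penalty `n * dist z w` is large, and near `z` the values of `c` are at least
`c z - ε` by lower semicontinuity. -/
lemma tendsto_lipschitzEnvelope (hc : LowerSemicontinuous c) (h0 : ∀ z, 0 ≤ c z) (z : Z) :
    Tendsto (fun n => lipschitzEnvelope c n z) atTop (𝓝 (c z)) := by
  refine tendsto_order.2 ⟨fun s hs => ?_, fun s hs => .of_forall fun n =>
    ((lipschitzEnvelope_le_min h0 n z).trans (min_le_left _ _)).trans_lt hs⟩
  obtain ⟨t, hst, htc⟩ := exists_between hs
  obtain ⟨r, hr, hball⟩ := Metric.eventually_nhds_iff.1 (hc z t htc)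
  filter_upwards [tendsto_natCast_atTop_atTop.eventually_ge_atTop t,
    tendsto_natCast_atTop_atTop.eventually_ge_atTop (t / r)] with n hn hnr
  have : Nonempty Z := ⟨z⟩
  refine hst.trans_le (le_ciInf fun w => ?_)
  obtain hw | hw := lt_or_ge (dist z w) r
  · have hcw : t < c w := hball (by rwa [dist_comm])
    exact le_add_of_le_of_nonneg (le_min hcw.le hn) (by positivity)
  · refine le_add_of_nonneg_of_le (le_min (h0 w) n.cast_nonneg) ?_
    exact ((div_le_iff₀ hr).1 hnr).trans (by gcongr)

end PseudoMetricSpace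

lemma exists_monotone_seq_boundedContinuousFunction_tendsto [TopologicalSpace Z]
    [TopologicalSpace.PseudoMetrizableSpace Z] (hc : LowerSemicontinuous c) (h0 : ∀ z, 0 ≤ c z) :
    ∃ f : ℕ → Z →ᵇ ℝ, Monotone f ∧ (∀ n z, 0 ≤ f n z) ∧ (∀ n z, f n z ≤ c z) ∧
      ∀ z, Tendsto (fun n => f n z) atTop (𝓝 (c z)) := by
  let _ := TopologicalSpace.pseudoMetrizableSpacePseudoMetric Z
  refine ⟨fun n => .ofNormedAddCommGroup (lipschitzEnvelope c n)
      (lipschitzWith_lipschitzEnvelope h0 n).continuous n fun z => ?_,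
    fun n m hnm z => monotone_lipschitzEnvelope h0 hnm z, lipschitzEnvelope_nonneg h0,
    fun n z => (lipschitzEnvelope_le_min h0 n z).trans (min_le_left _ _),
    tendsto_lipschitzEnvelope hc h0⟩
  rw [Real.norm_of_nonneg (lipschitzEnvelope_nonneg h0 n z)]
  exact (lipschitzEnvelope_le_min h0 n z).trans (min_le_right _ _)

lemma integrable_of_tendsto_of_integral_le [MeasurableSpace Z] {ρ : Measure Z} {f : ℕ → Z → ℝ}
    (hf : ∀ n, Integrable (f n) ρ) (h0 : ∀ n z, 0 ≤ f n z)
    (hlim : ∀ z, Tendsto (fun n => f n z) atTop (𝓝 (c z))) {r : ℝ}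
    (hr : ∀ n, ∫ z, f n z ∂ρ ≤ r) : Integrable c ρ := by
  refine ⟨aestronglyMeasurable_of_tendsto_ae _ (fun n => (hf n).aestronglyMeasurable)
    (.of_forall hlim), ?_⟩
  have hbound (n : ℕ) : ∫⁻ z, ‖f n z‖ₑ ∂ρ ≤ ENNReal.ofReal r := by
    rw [← ofReal_integral_norm_eq_lintegral_enorm (hf n)]
    simpa only [Real.norm_of_nonneg (h0 n _)] using ENNReal.ofReal_le_ofReal (hr n)
  calc ∫⁻ z, ‖c z‖ₑ ∂ρ = ∫⁻ z, liminf (fun n => ‖f n z‖ₑ) atTop ∂ρ := by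
        simp only [fun z => (hlim z).enorm.liminf_eq]
    _ ≤ liminf (fun n => ∫⁻ z, ‖f n z‖ₑ ∂ρ) atTop :=
      lintegral_liminf_le' fun n => (hf n).aestronglyMeasurable.enorm
    _ ≤ ENNReal.ofReal r := liminf_le_of_frequently_le' (.of_forall hbound)
    _ < ⊤ := ENNReal.ofReal_lt_top

variable [TopologicalSpace Z] [MeasurableSpace Z] [OpensMeasurableSpace Z]

lemma exists_forall_lt_integral_of_isCompact {S : Set (ProbabilityMeasure Z)} (hS : IsCompact S)
    {f : ℕ → Z →ᵇ ℝ} (hf : Monotone f) {r : ℝ}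
    (h : ∀ P ∈ S, ∃ n, r < ∫ z, f n z ∂(P : Measure Z)) :
    ∃ n, ∀ P ∈ S, r < ∫ z, f n z ∂(P : Measure Z) := by
  refine hS.elim_directed_cover (fun n => {P | r < ∫ z, f n z ∂(P : Measure Z)}) (fun n => ?_)
    (fun P hP => mem_iUnion.2 (h P hP)) (directed_of_isDirected_le fun n m hnm P hP => ?_)
  · exact isOpen_lt continuous_const
      (ProbabilityMeasure.continuous_integral_boundedContinuousFunction _)
  · exact hP.trans_le (integral_mono ((f n).integrable _) ((f m).integrable _) (hf hnm))

end Approximation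

section Existence

lemma IsOptimalPlan.exists_lt_integral {X Y : Type*} [MeasurableSpace X] [TopologicalSpace X]
    [MeasurableSpace Y] [TopologicalSpace Y] [OpensMeasurableSpace (X × Y)] {c : X × Y → ℝ}
    {π : Measure (X × Y)} (h : IsOptimalPlan c π)
    {f : ℕ → X × Y →ᵇ ℝ} (hf : Monotone f) (h0 : ∀ n z, 0 ≤ f n z)
    (hlim : ∀ z, Tendsto (fun n => f n z) atTop (𝓝 (c z))) {ε : ℝ} (hε : 0 < ε)
    {P : Measure (X × Y)} [IsFiniteMeasure P] (hP : IsCoupling P π.fst π.snd) :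
    ∃ n, ∫ z, c z ∂π - ε < ∫ z, f n z ∂P := by
  by_contra! hle
  have hint : Integrable c P :=
    integrable_of_tendsto_of_integral_le (fun n => (f n).integrable P) h0 hlim hle
  have hle' := le_of_tendsto' (integral_tendsto_of_tendsto_of_monotone
    (fun n => (f n).integrable P) hint (.of_forall fun z n m hnm => hf hnm z) (.of_forall hlim)) hle
  linarith [h P hP hint]

variable {X Y : Type*} [MeasurableSpace X] [TopologicalSpace X] [PolishSpace X] [BorelSpace X]
  [MeasurableSpace Y] [TopologicalSpace Y] [PolishSpace Y] [BorelSpace Y] {c : X × Y → ℝ}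
  {π : Measure (X × Y)}

lemma isClosed_setOf_isCoupling (μ : Measure X) (ν : Measure Y) [IsProbabilityMeasure μ]
    [IsProbabilityMeasure ν] :
    IsClosed {P : ProbabilityMeasure (X × Y) | IsCoupling (P : Measure (X × Y)) μ ν} := by
  have hfst : IsClosed {P : ProbabilityMeasure (X × Y) |
      P.map measurable_fst.aemeasurable = ⟨μ, inferInstance⟩} :=
    isClosed_eq (ProbabilityMeasure.continuous_map continuous_fst) continuous_const
  have hsnd : IsClosed {P : ProbabilityMeasure (X × Y) |
      P.map measurable_snd.aemeasurable = ⟨ν, inferInstance⟩} :=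
    isClosed_eq (ProbabilityMeasure.continuous_map continuous_snd) continuous_const
  convert hfst.inter hsnd using 1
  ext P
  exact ⟨fun h => ⟨Subtype.ext h.1, Subtype.ext h.2⟩,
    fun h => ⟨congrArg Subtype.val h.1, congrArg Subtype.val h.2⟩⟩

lemma isCompact_setOf_isCoupling (μ : Measure X) (ν : Measure Y) [IsProbabilityMeasure μ]
    [IsProbabilityMeasure ν] :
    IsCompact {P : ProbabilityMeasure (X × Y) | IsCoupling (P : Measure (X × Y)) μ ν} := by
  let _ := TopologicalSpace.upgradeIsCompletelyMetrizable X
  let _ := TopologicalSpace.upgradeIsCompletelyMetrizable Y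
  rw [← (isClosed_setOf_isCoupling μ ν).closure_eq]
  refine isCompact_closure_of_isTightMeasureSet (IsTightMeasureSet.prodMk ?_ ?_)
  · refine (isTightMeasureSet_singleton (μ := μ)).subset ?_
    rintro _ ⟨_, ⟨P, hP, rfl⟩, rfl⟩
    exact hP.1
  · refine (isTightMeasureSet_singleton (μ := ν)).subset ?_
    rintro _ ⟨_, ⟨P, hP, rfl⟩, rfl⟩
    exact hP.2

lemma exists_isCoupling_isOptimalPlan (π : Measure (X × Y)) [IsProbabilityMeasure π]
    (f : X × Y →ᵇ ℝ) :
    ∃ P : ProbabilityMeasure (X × Y), IsCoupling (P : Measure (X × Y)) π.fst π.snd ∧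
      IsOptimalPlan f (P : Measure (X × Y)) := by
  obtain ⟨P, hP, hmin⟩ := (isCompact_setOf_isCoupling π.fst π.snd).exists_isMinOn
    ⟨⟨π, inferInstance⟩, isCoupling_fst_snd π⟩
    (ProbabilityMeasure.continuous_integral_boundedContinuousFunction f).continuousOn
  refine ⟨P, hP, fun π' hπ' _ => ?_⟩
  have hprob := hπ'.isProbabilityMeasure
  rw [Measure.fst, Measure.snd, hP.1, hP.2] at hπ'
  exact hmin (show (⟨π', hprob⟩ : ProbabilityMeasure (X × Y)) ∈ _ from hπ')

lemma IsOptimalPlan.hasNoDualityGap_of_boundedContinuousFunction [IsProbabilityMeasure π]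
    {f : X × Y →ᵇ ℝ} (h : IsOptimalPlan f π) (h0 : ∀ z, 0 ≤ f z) : HasNoDualityGap f π :=
  h.cyclicallyMonotone_support.hasNoDualityGap f.continuous.lowerSemicontinuous h0
    (f.integrable π) Measure.isClosed_support.measurableSet Measure.measure_compl_support

lemma IsOptimalPlan.hasNoDualityGap [IsProbabilityMeasure π] (hc : LowerSemicontinuous c)
    (h0 : ∀ z, 0 ≤ c z) (h : IsOptimalPlan c π) : HasNoDualityGap c π := by
  intro ε hε
  obtain ⟨f, hf, hf0, hfc, hlim⟩ := exists_monotone_seq_boundedContinuousFunction_tendsto hc h0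
  obtain ⟨n, hn⟩ := exists_forall_lt_integral_of_isCompact
    (isCompact_setOf_isCoupling π.fst π.snd) hf
    fun P hP => h.exists_lt_integral hf hf0 hlim (half_pos hε) hP
  obtain ⟨P, hP, hopt⟩ := exists_isCoupling_isOptimalPlan π (f n)
  obtain ⟨φ, ψ, hpair, hlt⟩ :=
    hopt.hasNoDualityGap_of_boundedContinuousFunction (hf0 n) _ (half_pos hε)
  rw [Measure.fst, Measure.snd, hP.1, hP.2] at hpair hlt
  refine ⟨φ, ψ, { hpair with add_le := fun x y => (hpair.add_le x y).trans (hfc n _) }, ?_⟩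
  linarith [hn P hP]

end Existence

section Main

variable {X Y : Type*} [MeasurableSpace X] [MeasurableSpace Y] {c : X × Y → ℝ} {a : X → ℝ}
  {b : Y → ℝ} {π : Measure (X × Y)} {μ : Measure X} {ν : Measure Y}

lemma isOptimalPlan_sub_iff (ha : Integrable a π.fst) (hb : Integrable b π.snd)
    (hint : Integrable c π) :
    IsOptimalPlan (fun z => c z - (a z.1 + b z.2)) π ↔ IsOptimalPlan c π := by
  refine forall₂_congr fun π' hπ' => ?_
  rw [hπ'.integrable_sub_iff ha hb]
  refine forall_congr' fun hint' => ?_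
  rw [(isCoupling_fst_snd π).integral_sub ha hb hint, hπ'.integral_sub ha hb hint',
    sub_le_sub_iff_right]

lemma IsCoupling.integral_eq_sInf_iff (hπ : IsCoupling π μ ν) (hint : Integrable c π)
    (ha : Integrable a μ) (hb : Integrable b ν) (hab : ∀ x y, a x + b y ≤ c (x, y)) :
    ∫ z, c z ∂π = sInf {r : ℝ | ∃ π' : Measure (X × Y), IsCoupling π' μ ν ∧ Integrable c π' ∧
      r = ∫ z, c z ∂π'} ↔ IsOptimalPlan c π := by
  have hbdd : BddBelow {r : ℝ | ∃ π' : Measure (X × Y), IsCoupling π' μ ν ∧ Integrable c π' ∧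
      r = ∫ z, c z ∂π'} := by
    refine ⟨∫ x, a x ∂μ + ∫ y, b y ∂ν, ?_⟩
    rintro _ ⟨π', hπ', hint', rfl⟩
    exact hπ'.integral_add_integral_le ha hb hab hint'
  obtain ⟨rfl, rfl⟩ := hπ
  refine ⟨fun h π' hπ' hint' => h.trans_le (csInf_le hbdd ⟨π', hπ', hint', rfl⟩), fun h => ?_⟩
  refine Eq.symm (IsLeast.csInf_eq ⟨⟨π, isCoupling_fst_snd π, hint, rfl⟩, ?_⟩)
  rintro _ ⟨π', hπ', hint', rfl⟩
  exact h π' hπ' hint'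

variable [TopologicalSpace X] [PolishSpace X] [BorelSpace X] [TopologicalSpace Y] [PolishSpace Y]
  [BorelSpace Y]

lemma isOptimalPlan_iff_exists_cyclicallyMonotone_of_nonneg [IsProbabilityMeasure π]
    (hc : LowerSemicontinuous c) (h0 : ∀ z, 0 ≤ c z) (hint : Integrable c π) :
    IsOptimalPlan c π ↔
      ∃ Γ : Set (X × Y), MeasurableSet Γ ∧ CyclicallyMonotone c Γ ∧ π Γᶜ = 0 := by
  constructor
  · intro h
    exact (h.hasNoDualityGap hc h0).exists_cyclicallyMonotone hc.measurable hint
  · rintro ⟨Γ, hΓ, h, hπ⟩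
    exact (h.hasNoDualityGap hc h0 hint hΓ hπ).isOptimalPlan

lemma isOptimalPlan_iff_exists_cyclicallyMonotone_of_continuous [IsProbabilityMeasure π]
    (hc : LowerSemicontinuous c) (ha : Continuous a) (hb : Continuous b)
    (hai : Integrable a π.fst) (hbi : Integrable b π.snd) (hab : ∀ x y, a x + b y ≤ c (x, y))
    (hint : Integrable c π) :
    IsOptimalPlan c π ↔
      ∃ Γ : Set (X × Y), MeasurableSet Γ ∧ CyclicallyMonotone c Γ ∧ π Γᶜ = 0 := by
  have hsub : LowerSemicontinuous fun z => c z - (a z.1 + b z.2) := by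
    simp only [sub_eq_add_neg]
    exact hc.add (by fun_prop : Continuous fun z : X × Y => -(a z.1 + b z.2)).lowerSemicontinuous
  have h := isOptimalPlan_iff_exists_cyclicallyMonotone_of_nonneg hsub
    (fun z => sub_nonneg.2 (hab z.1 z.2))
    (((isCoupling_fst_snd π).integrable_sub_iff hai hbi).2 hint)
  simpa only [isOptimalPlan_sub_iff hai hbi hint, cyclicallyMonotone_sub_iff] using h

/-- Both sides of the equivalence depend only on the σ-algebras, and finer Polish topologies with
the same Borel sets make `a` and `b` continuous. -/
lemma isOptimalPlan_iff_exists_cyclicallyMonotone [IsProbabilityMeasure π]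
    (hc : LowerSemicontinuous c) (ha : Measurable a) (hb : Measurable b)
    (hai : Integrable a π.fst) (hbi : Integrable b π.snd) (hab : ∀ x y, a x + b y ≤ c (x, y))
    (hint : Integrable c π) :
    IsOptimalPlan c π ↔
      ∃ Γ : Set (X × Y), MeasurableSet Γ ∧ CyclicallyMonotone c Γ ∧ π Γᶜ = 0 := by
  obtain ⟨tX, hX, _, _, ha'⟩ := exists_finer_polishSpace_continuous ha
  obtain ⟨tY, hY, _, _, hb'⟩ := exists_finer_polishSpace_continuous hb
  refine isOptimalPlan_iff_exists_cyclicallyMonotone_of_continuous ?_ ha' hb' hai hbi hab hint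
  exact fun z r hr => nhds_mono (inf_le_inf (induced_mono hX) (induced_mono hY)) (hc z r hr)

theorem optimal_iff_cyclically_monotone_general [IsProbabilityMeasure μ]
    (hc : LowerSemicontinuous c) (ha : Measurable a) (hb : Measurable b) (hai : Integrable a μ)
    (hbi : Integrable b ν) (hab : ∀ x y, a x + b y ≤ c (x, y)) (hπ : IsCoupling π μ ν)
    (hint : Integrable c π) :
    (∫ z, c z ∂π
        = sInf {r : ℝ | ∃ π' : Measure (X × Y), IsCoupling π' μ ν ∧ Integrable c π' ∧
            r = ∫ z, c z ∂π'})
      ↔ ∃ Γ : Set (X × Y), MeasurableSet Γ ∧ CyclicallyMonotone c Γ ∧ π Γᶜ = 0 := by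
  have := hπ.isProbabilityMeasure
  rw [hπ.integral_eq_sInf_iff hint hai hbi hab]
  obtain ⟨rfl, rfl⟩ := hπ
  exact isOptimalPlan_iff_exists_cyclicallyMonotone hc ha hb hai hbi hab hint

end Main

/-- A coupling with finite cost is optimal if and only if it is concentrated on a
`c`-cyclically monotone set. -/
theorem optimal_iff_cyclically_monotone
    {X Y : Type*}
    [MeasurableSpace X] [TopologicalSpace X] [PolishSpace X] [BorelSpace X]
    [MeasurableSpace Y] [TopologicalSpace Y] [PolishSpace Y] [BorelSpace Y]
    (μ : Measure X) (ν : Measure Y) [IsProbabilityMeasure μ] [IsProbabilityMeasure ν]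
    (c : X × Y → ℝ) (hc : LowerSemicontinuous c)
    (a : X → ℝ) (b : Y → ℝ)
    (ha : UpperSemicontinuous a) (hb : UpperSemicontinuous b)
    (hai : Integrable a μ) (hbi : Integrable b ν)
    (hab : ∀ x y, a x + b y ≤ c (x, y))
    (π : Measure (X × Y)) (hπ : IsCoupling π μ ν) (hint : Integrable c π) :
    (∫ z, c z ∂π
        = sInf {r : ℝ | ∃ π' : Measure (X × Y), IsCoupling π' μ ν ∧ Integrable c π' ∧
            r = ∫ z, c z ∂π'})
      ↔ ∃ Γ : Set (X × Y), MeasurableSet Γ ∧ CyclicallyMonotone c Γ ∧ π Γᶜ = 0 :=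
  optimal_iff_cyclically_monotone_general hc ha.measurable hb.measurable hai hbi hab hπ hint
end

section
/- (Multi-marginal optimal transport with strictly submodular cost on ℝ) Let μ₁,…,μ_K be Borel probability measures on compact subsets X₁,…,X_K of ℝ, each absolutely continuous with respect to Lebesgue measure, and let c : ℝ^K → ℝ be continuous, bounded, and strictly submodular. Then the Kantorovich problem inf over couplings π ∈ M(μ₁,…,μ_K) of ∫ c dπ, its dual sup over (φ₁,…,φ_K) with Σ_k φ_k(x_k) ≤ c(x₁,…,x_K) of Σ_k ∫ φ_k dμ_k, and the Monge problem inf over maps F₂,…,F_K with (F_k)_# μ₁ = μ_k of ∫ c(x₁,F₂(x₁),…,F_K(x₁)) dμ₁ all admit solutions and have equal values; moreover the Monge problem has a μ₁-almost surely unique solution (F₂,…,F_K) in which each F_k is non-decreasing. -/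
open MeasureTheory Set

/-- A multi-marginal coupling: a measure on `ℝ^K` whose `k`-th marginal is `μ k`. -/
def IsMCoupling {K : ℕ} (π : Measure (Fin K → ℝ)) (μ : Fin K → Measure ℝ) : Prop :=
  ∀ k, π.map (fun f => f k) = μ k

/-- `c : ℝ^K → ℝ` is strictly submodular:
`c(x + t eᵢ + s eⱼ) + c(x) < c(x + t eᵢ) + c(x + s eⱼ)` for all `x`, `t, s > 0` and `i ≠ j`. -/
def StrictlySubmodular {K : ℕ} (c : (Fin K → ℝ) → ℝ) : Prop :=
  ∀ (x : Fin K → ℝ) (t s : ℝ), 0 < t → 0 < s → ∀ i j : Fin K, i ≠ j →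
    c (x + t • (Pi.single i 1 : Fin K → ℝ) + s • (Pi.single j 1 : Fin K → ℝ)) + c x
      < c (x + t • (Pi.single i 1 : Fin K → ℝ)) + c (x + s • (Pi.single j 1 : Fin K → ℝ))

/-- A family of maps is Monge-feasible if the first one is the identity and each pushes the
first marginal forward to the corresponding marginal. -/
def MongeFeasible {K : ℕ} [NeZero K] (μ : Fin K → Measure ℝ)
    (T : Fin K → ℝ → ℝ) : Prop :=
  T 0 = id ∧ ∀ k, Measurable (T k) ∧ (μ 0).map (T k) = μ k

/-!
Let `T` be the monotone maps pushing `μ 0` forward to the `μ k`. The curve `x ↦ (T k x)ₖ` is a chain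
in `ℝ^K`, and submodularity alone yields potentials `φ k` with `∑ φ k (x k) ≤ c x`, saturated along
that chain. On a finite grid they are built by raising the upper corner of a box one coordinate at a
time, always staying above the remaining part of the chain; the inequality on the enlarged box is
exactly submodularity. They can be normalised to be bounded by a constant depending only on `K` and
`sup |c|`, so compactness passes from finite grids to all of `ℝ^K`, and `c`-conjugation in each
coordinate makes them measurable. Saturation along `T` gives equality of the three values.

Strict submodularity forces the contact set `{x | ∑ φ k (x k) = c x}` to be a chain. Any optimal
Monge map lies in it almost everywhere, so its coordinates interlace those of `T`, and must agree
with them at every continuity point of the monotone maps `T k`.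
-/

section StrictSubmodularity

/-- The mixed second differences of `c` in the directions `u` and `v` are negative at every base
point. Strict submodularity is this property for multiples of two distinct basis vectors. -/
def HasNegMixedDifferences {G : Type*} [Add G] (c : G → ℝ) (u v : G) : Prop :=
  ∀ x, c (x + u + v) + c x < c (x + u) + c (x + v)

namespace HasNegMixedDifferences

variable {G ι κ : Type*} [AddCommMonoid G] {c : G → ℝ} {u v w : G}

theorem symm (h : HasNegMixedDifferences c u v) : HasNegMixedDifferences c v u := fun x => by
  rw [add_right_comm, add_comm (c (x + v))]
  exact h x

theorem add_right (hv : HasNegMixedDifferences c u v) (hw : HasNegMixedDifferences c u w) :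
    HasNegMixedDifferences c u (v + w) := fun x => by
  have hw' := hw (x + v)
  rw [add_right_comm x v u] at hw'
  rw [← add_assoc, ← add_assoc]
  linarith [hv x]

theorem sum_right {s : Finset κ} (hs : s.Nonempty) {f : κ → G}
    (h : ∀ j ∈ s, HasNegMixedDifferences c u (f j)) :
    HasNegMixedDifferences c u (∑ j ∈ s, f j) :=
  Finset.sum_induction_nonempty f _ (fun _ _ => add_right) hs h

theorem sum_sum {s : Finset ι} {t : Finset κ} (hs : s.Nonempty) (ht : t.Nonempty)
    {f : ι → G} {g : κ → G} (h : ∀ i ∈ s, ∀ j ∈ t, HasNegMixedDifferences c (f i) (g j)) :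
    HasNegMixedDifferences c (∑ i ∈ s, f i) (∑ j ∈ t, g j) :=
  (sum_right hs fun i hi => (sum_right ht (h i hi)).symm).symm

end HasNegMixedDifferences

theorem posPart_eq_sum_single {ι : Type*} [Fintype ι] [DecidableEq ι] (v : ι → ℝ) :
    v⁺ = ∑ i with 0 < v i, v i • Pi.single i 1 := by
  ext k
  by_cases hk : 0 < v k
  · simp [Finset.sum_apply, Pi.single_apply, hk, hk.le]
  · simp [Finset.sum_apply, Pi.single_apply, hk, not_lt.1 hk]

theorem StrictlySubmodular.inf_add_sup_lt {K : ℕ} {c : (Fin K → ℝ) → ℝ}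
    (hc : StrictlySubmodular c) {a b : Fin K → ℝ} (hab : ¬a ≤ b) (hba : ¬b ≤ a) :
    c (a ⊓ b) + c (a ⊔ b) < c a + c b := by
  have exists_pos_sub : ∀ {x y : Fin K → ℝ}, ¬x ≤ y →
      (Finset.univ.filter fun k => 0 < (x - y) k).Nonempty := fun h => by
    simpa [Finset.filter_nonempty_iff, Pi.le_def] using h
  have h : HasNegMixedDifferences c (a - b)⁺ (b - a)⁺ := by
    rw [posPart_eq_sum_single, posPart_eq_sum_single]
    refine .sum_sum (exists_pos_sub hab) (exists_pos_sub hba) fun i hi j hj x => ?_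
    have hi : 0 < (a - b) i := (Finset.mem_filter.1 hi).2
    have hj : 0 < (b - a) j := (Finset.mem_filter.1 hj).2
    refine hc x _ _ hi hj i j ?_
    rintro rfl
    simp only [Pi.sub_apply] at hi hj
    linarith
  have ha : a ⊓ b + (a - b)⁺ = a := by
    ext k
    rcases le_total (a k) (b k) with hk | hk <;> simp [hk]
  have hb : a ⊓ b + (b - a)⁺ = b := by
    ext k
    rcases le_total (a k) (b k) with hk | hk <;> simp [hk]
  have hsup : a + (b - a)⁺ = a ⊔ b := by
    ext k
    rcases le_total (a k) (b k) with hk | hk <;> simp [hk]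
  have h' := h (a ⊓ b)
  rw [ha, hb, hsup] at h'
  linarith

/-- Submodularity of a function on a lattice; it is what the existence of potentials needs. -/
def IsSubmodular {β : Type*} [Lattice β] (c : β → ℝ) : Prop :=
  ∀ a b, c (a ⊓ b) + c (a ⊔ b) ≤ c a + c b

theorem StrictlySubmodular.isSubmodular {K : ℕ} {c : (Fin K → ℝ) → ℝ}
    (hc : StrictlySubmodular c) : IsSubmodular c := fun a b => by
  by_cases hab : a ≤ b
  · rw [inf_eq_left.2 hab, sup_eq_right.2 hab]
  by_cases hba : b ≤ a
  · rw [inf_eq_right.2 hba, sup_eq_left.2 hba, add_comm]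
  exact (hc.inf_add_sup_lt hab hba).le

end StrictSubmodularity

section Potentials

variable {ι : Type*} {α : ι → Type*}

section Grid

variable [∀ k, LinearOrder (α k)] [DecidableEq ι] {A : ∀ k, Finset (α k)} {q : ∀ k, α k}

theorem exists_le_update_of_lt {m : ∀ k, α k} (hm : ∀ k, m k ∈ A k) (hmq : m < q) :
    ∃ i, ∃ a ∈ A i, a < q i ∧ (∀ b ∈ A i, b < q i → b ≤ a) ∧ m ≤ Function.update q i a := by
  obtain ⟨hle, i, hi⟩ := Pi.lt_def.1 hmq
  have hmi : m i ∈ (A i).filter (· < q i) := Finset.mem_filter.2 ⟨hm i, hi⟩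
  obtain ⟨a, ha, hmax⟩ := Finset.exists_max_image _ id ⟨_, hmi⟩
  have haA := Finset.mem_filter.1 ha
  exact ⟨i, a, haA.1, haA.2, fun b hb hbq => hmax b (Finset.mem_filter.2 ⟨hb, hbq⟩),
    le_update_iff.2 ⟨hmax _ hmi, fun k _ => hle k⟩⟩

theorem exists_forall_le_update_of_isChain {D : Set (∀ k, α k)} (hD : IsChain (· ≤ ·) D)
    (hfin : D.Finite) (hDA : ∀ x ∈ D, (∀ k, x k ∈ A k) ∧ x < q)
    (hq : ∃ m, (∀ k, m k ∈ A k) ∧ m < q) :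
    ∃ i, ∃ a ∈ A i, a < q i ∧ (∀ b ∈ A i, b < q i → b ≤ a) ∧
      ∀ x ∈ D, x ≤ Function.update q i a := by
  obtain ⟨m, ⟨hmA, hmq⟩, hDm⟩ : ∃ m, ((∀ k, m k ∈ A k) ∧ m < q) ∧ ∀ x ∈ D, x ≤ m := by
    rcases D.eq_empty_or_nonempty with rfl | hne
    · exact hq.imp fun m hm => ⟨hm, fun _ => False.elim⟩
    · obtain ⟨m, hm⟩ := hfin.exists_maximal hne
      exact ⟨m, hDA m hm.prop, fun x hx => (hD.total hx hm.prop).elim id (hm.le_of_ge hx)⟩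
  obtain ⟨i, a, ha, haq, hgap, hma⟩ := exists_le_update_of_lt hmA hmq
  exact ⟨i, a, ha, haq, hgap, fun x hx => (hDm x hx).trans hma⟩

end Grid

variable [Fintype ι]

/-- Kantorovich potentials `φ` for the cost `c`: they are admissible on the box `∏ k, S k`, and the
constraint is saturated on `Γ`. The box is a parameter so that potentials on finite grids fit the
same notion. -/
structure IsTightPotential (c : (∀ k, α k) → ℝ) (S : ∀ k, Set (α k)) (Γ : Set (∀ k, α k))
    (φ : ∀ k, α k → ℝ) : Prop where
  sum_le : ∀ x ∈ univ.pi S, ∑ k, φ k (x k) ≤ c x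
  sum_eq : ∀ x ∈ Γ, ∑ k, φ k (x k) = c x

namespace IsTightPotential

variable {c : (∀ k, α k) → ℝ} {S : ∀ k, Set (α k)} {Γ : Set (∀ k, α k)} {φ : ∀ k, α k → ℝ}

theorem mono {Γ' : Set (∀ k, α k)} (hφ : IsTightPotential c S Γ φ) (h : Γ' ⊆ Γ) :
    IsTightPotential c S Γ' φ :=
  ⟨hφ.sum_le, fun x hx => hφ.sum_eq x (h hx)⟩

theorem raise_corner [∀ k, LinearOrder (α k)] [DecidableEq ι] (hc : IsSubmodular c)
    {q : ∀ k, α k} {i : ι} {a : α i} (hq : ∀ k, q k ∈ S k) (ha : a ∈ S i) (haq : a < q i)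
    (hgap : ∀ b ∈ S i, b < q i → b ≤ a)
    (hΓ : ∀ x ∈ Γ, x ≤ Function.update q i a)
    (hφ : IsTightPotential c (fun k => S k ∩ Iic (Function.update q i a k))
      (insert (Function.update q i a) Γ) φ) :
    IsTightPotential c (fun k => S k ∩ Iic (q k)) (insert q Γ) fun k b =>
      φ k (b ⊓ Function.update q i a k) +
        if i = k ∧ q k ≤ b then c q - c (Function.update q i a) else 0 := by
  set q' := Function.update q i a with hq'
  have hq'q : q' ≤ q := update_le_self_iff.2 haq.le
  have hq'S : ∀ k, q' k ∈ S k := (Function.forall_update_iff q fun k b => b ∈ S k).2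
    ⟨ha, fun k _ => hq k⟩
  have hsum (x : ∀ k, α k) :
      ∑ k, (φ k (x k ⊓ q' k) + if i = k ∧ q k ≤ x k then c q - c q' else 0) =
        ∑ k, φ k ((x ⊓ q') k) + if q i ≤ x i then c q - c q' else 0 := by
    simp only [ite_and, Finset.sum_add_distrib, Finset.sum_ite_eq, Finset.mem_univ, if_true,
      Pi.inf_apply]
  have hlow : ∀ x ≤ q', ¬q i ≤ x i := fun x hx => not_le.2 <|
    (hx i).trans_lt <| by simpa only [hq', Function.update_self] using haq
  refine ⟨fun x hx => ?_, ?_⟩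
  · rw [hsum]
    have hxS : ∀ k, x k ∈ S k := fun k => (hx k trivial).1
    have hxq : x ≤ q := fun k => (hx k trivial).2
    have hinf : ∑ k, φ k ((x ⊓ q') k) ≤ c (x ⊓ q') := hφ.sum_le _ fun k _ =>
      ⟨inf_ind (p := (· ∈ S k)) _ _ (hxS k) (hq'S k), inf_le_right⟩
    by_cases hxi : q i ≤ x i
    · have hsup : x ⊔ q' = q := by
        refine le_antisymm (sup_le hxq hq'q) fun k => ?_
        rcases eq_or_ne k i with rfl | hk
        · exact le_sup_of_le_left hxi
        · exact le_sup_of_le_right (Function.update_of_ne hk _ _).ge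
      have hsub := hc x q'
      rw [hsup] at hsub
      rw [if_pos hxi]
      linarith
    · have hxq' : x ≤ q' :=
        le_update_iff.2 ⟨hgap _ (hxS i) (not_le.1 hxi), fun k _ => hxq k⟩
      rw [if_neg hxi, add_zero]
      rwa [inf_eq_left.2 hxq'] at hinf ⊢
  · rintro x (rfl | hx)
    · rw [hsum, inf_eq_right.2 hq'q, if_pos le_rfl, hφ.sum_eq _ (mem_insert _ _)]
      ring
    · rw [hsum, inf_eq_left.2 (hΓ x hx), if_neg (hlow x (hΓ x hx)), add_zero]
      exact hφ.sum_eq x (mem_insert_of_mem _ hx)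

end IsTightPotential

theorem exists_isTightPotential_grid [∀ k, LinearOrder (α k)] [DecidableEq ι] [Nonempty ι]
    {c : (∀ k, α k) → ℝ} (hc : IsSubmodular c) (A : ∀ k, Finset (α k)) (q : Fintype.piFinset A)
    {C : Set (∀ k, α k)} (hC : IsChain (· ≤ ·) C)
    (hCA : C ⊆ univ.pi fun k => (A k : Set (α k)) ∩ Iic (q.1 k)) :
    ∃ φ, IsTightPotential c (fun k => (A k : Set (α k)) ∩ Iic (q.1 k)) C φ := by
  induction q using WellFoundedLT.induction generalizing C with
  | ind q ih =>
  obtain ⟨q, hqA⟩ := q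
  have hq : ∀ k, q k ∈ A k := Fintype.mem_piFinset.1 hqA
  by_cases hmin : ∃ m, (∀ k, m k ∈ A k) ∧ m < q
  · have hD : ∀ x ∈ C \ {q}, (∀ k, x k ∈ A k) ∧ x < q := fun x hx =>
      ⟨fun k => (hCA hx.1 k trivial).1, lt_of_le_of_ne (fun k => (hCA hx.1 k trivial).2) hx.2⟩
    have hfin : (C \ {q}).Finite := (Fintype.piFinset A).finite_toSet.subset fun x hx =>
      Fintype.mem_piFinset.2 (hD x hx).1
    obtain ⟨i, a, ha, haq, hgap, hDu⟩ :=
      exists_forall_le_update_of_isChain (hC.mono sdiff_subset) hfin hD hmin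
    have huA : ∀ k, Function.update q i a k ∈ A k :=
      (Function.forall_update_iff q fun k b => b ∈ A k).2 ⟨ha, fun k _ => hq k⟩
    have hchain : IsChain (· ≤ ·) (insert (Function.update q i a) (C \ {q})) :=
      (hC.mono sdiff_subset).insert fun x hx _ => Or.inr (hDu x hx)
    obtain ⟨φ, hφ⟩ := ih ⟨_, Fintype.mem_piFinset.2 huA⟩ (update_lt_self_iff.2 haq) hchain <| by
      rintro x (rfl | hx) k -
      · exact ⟨huA k, le_rfl⟩
      · exact ⟨(hD x hx).1 k, hDu x hx k⟩
    exact ⟨_, (hφ.raise_corner hc hq ha haq hgap hDu).mono (by simp [subset_insert])⟩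
  · have hbox : ∀ x ∈ univ.pi fun k => (A k : Set (α k)) ∩ Iic (q k), x = q := fun x hx =>
      by_contra fun hxq => hmin ⟨x, fun k => (hx k trivial).1,
        lt_of_le_of_ne (fun k => (hx k trivial).2) hxq⟩
    have hconst : ∑ _k : ι, c q / Fintype.card ι = c q := by
      simp [mul_div_cancel₀]
    refine ⟨fun _ _ => c q / Fintype.card ι, fun x hx => ?_, fun x hx => ?_⟩
    · rw [hconst, hbox x hx]
    · rw [hconst, hbox x (hCA hx)]

/-- Truncation of `x` to the interval `[-B, B]`, meaningful for `0 ≤ B`. -/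
def clamp (B x : ℝ) : ℝ := max (-B) (min x B)

theorem abs_clamp_le {B : ℝ} (hB : 0 ≤ B) (x : ℝ) : |clamp B x| ≤ B :=
  abs_le.2 ⟨le_max_left _ _, max_le (by linarith) (min_le_right _ _)⟩

theorem clamp_eq_self {B x : ℝ} (hx : |x| ≤ B) : clamp B x = x := by
  rw [clamp, min_eq_left (abs_le.1 hx).2, max_eq_right (abs_le.1 hx).1]

theorem measurable_clamp (B : ℝ) : Measurable (clamp B) :=
  measurable_const.max (measurable_id.min measurable_const)

theorem sum_le_add_card_mul {v : ι → ℝ} {U : ℝ} (hU : 0 ≤ U) (hv : ∀ k, v k ≤ U) (k : ι) :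
    ∑ j, v j ≤ v k + Fintype.card ι * U := by
  classical
  rw [Fintype.sum_eq_add_sum_compl k]
  gcongr
  calc ∑ j ∈ {k}ᶜ, v j ≤ ∑ _j ∈ ({k}ᶜ : Finset ι), U := Finset.sum_le_sum fun j _ => hv j
    _ ≤ Fintype.card ι * U := by
      rw [Finset.sum_const, nsmul_eq_mul]
      gcongr
      exact Finset.card_le_univ _

theorem sum_update_apply [DecidableEq ι] (φ : ∀ k, α k → ℝ) (x : ∀ k, α k) (k : ι) (a : α k) :
    ∑ j, φ j (Function.update x k a j) = φ k a + ∑ j ∈ {k}ᶜ, φ j (x j) := by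
  simp_rw [Function.apply_update φ]
  rw [Finset.sum_update_of_mem (Finset.mem_univ k), Finset.compl_eq_univ_sdiff]

namespace IsTightPotential

variable {c : (∀ k, α k) → ℝ} {S : ∀ k, Set (α k)} {Γ : Set (∀ k, α k)} {φ : ∀ k, α k → ℝ} {M : ℝ}

theorem sum_le_univ (hφ : IsTightPotential c (fun _ => univ) Γ φ) (x : ∀ k, α k) :
    ∑ k, φ k (x k) ≤ c x :=
  hφ.sum_le x fun _ _ => trivial

theorem apply_le [DecidableEq ι] (hφ : IsTightPotential c S Γ φ) {p : ∀ k, α k} (hpΓ : p ∈ Γ)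
    (hpS : p ∈ univ.pi S) {k : ι} {a : α k} (ha : a ∈ S k) :
    φ k a ≤ c (Function.update p k a) - c p + φ k (p k) := by
  have hle := hφ.sum_le _ ((update_mem_pi_iff_of_mem hpS).2 fun _ => ha)
  have heq := hφ.sum_eq p hpΓ
  rw [sum_update_apply] at hle
  rw [Fintype.sum_eq_add_sum_compl k] at heq
  linarith

theorem add_const (hφ : IsTightPotential c S Γ φ) {s : ι → ℝ} (hs : ∑ k, s k = 0) :
    IsTightPotential c S Γ fun k a => φ k a + s k := by
  constructor
  · simpa only [Finset.sum_add_distrib, hs, add_zero] using hφ.sum_le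
  · simpa only [Finset.sum_add_distrib, hs, add_zero] using hφ.sum_eq

theorem clamped {U B : ℝ} (hφ : IsTightPotential c S Γ φ) (hM : ∀ x, |c x| ≤ M)
    (hΓS : Γ ⊆ univ.pi S) (hU0 : 0 ≤ U) (hU : ∀ k, ∀ a ∈ S k, φ k a ≤ U) (hUB : U ≤ B)
    (hB : M + Fintype.card ι * U ≤ B) :
    IsTightPotential c S Γ fun k a => clamp B (φ k a) := by
  have hself : ∀ x ∈ univ.pi S, (∀ k, -B ≤ φ k (x k)) →
      ∑ k, clamp B (φ k (x k)) = ∑ k, φ k (x k) := fun x hx h =>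
    Finset.sum_congr rfl fun k _ =>
      clamp_eq_self (abs_le.2 ⟨h k, (hU k _ (hx k trivial)).trans hUB⟩)
  refine ⟨fun x hx => ?_, fun x hx => ?_⟩
  · by_cases h : ∀ k, -B ≤ φ k (x k)
    · exact (hself x hx h).trans_le (hφ.sum_le x hx)
    · -- One term cut off at `-B` already pushes the whole sum below `-M`.
      obtain ⟨k, hk⟩ := not_forall.1 h
      have hclamp : clamp B (φ k (x k)) = -B :=
        max_eq_left ((min_le_left _ _).trans (not_le.1 hk).le)
      have hsum := sum_le_add_card_mul (v := fun k => clamp B (φ k (x k))) hU0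
        (fun k => max_le (by linarith) ((min_le_left _ _).trans (hU k _ (hx k trivial)))) k
      linarith [(abs_le.1 (hM x)).1]
  · rw [hself x (hΓS hx) fun k => ?_, hφ.sum_eq x hx]
    have hsum := sum_le_add_card_mul hU0 (fun k => hU k (x k) (hΓS hx k trivial)) k
    rw [hφ.sum_eq x hx] at hsum
    linarith [(abs_le.1 (hM x)).1]

theorem exists_clamp_add_const [Nonempty ι] (hφ : IsTightPotential c S Γ φ)
    (hM : ∀ x, |c x| ≤ M) (hΓS : Γ ⊆ univ.pi S) (hΓ : Γ.Nonempty) :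
    ∃ s : ι → ℝ, IsTightPotential c S Γ fun k a =>
      clamp (3 * (Fintype.card ι + 1) * M) (φ k a + s k) := by
  classical
  obtain ⟨p, hp⟩ := hΓ
  have hM0 : 0 ≤ M := (abs_nonneg _).trans (hM p)
  have hcard : (1 : ℝ) ≤ Fintype.card ι := by exact_mod_cast Fintype.card_pos
  -- Giving every potential the value `c p / card ι` at `p` bounds each of them above by `3 * M`.
  have hs : ∑ k, (c p / Fintype.card ι - φ k (p k)) = 0 := by
    simp [hφ.sum_eq p hp, mul_div_cancel₀]
  refine ⟨_, (hφ.add_const hs).clamped hM hΓS (U := 3 * M) (by positivity) (fun k a ha => ?_)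
    (by nlinarith) (by nlinarith)⟩
  have happly := (hφ.add_const hs).apply_le hp (hΓS hp) ha
  have hdiv : c p / Fintype.card ι ≤ M :=
    (div_le_div_of_nonneg_right (abs_le.1 (hM p)).2 (by positivity)).trans
      (div_le_self hM0 hcard)
  linarith [(abs_le.1 (hM (Function.update p k a))).2, (abs_le.1 (hM p)).1]

end IsTightPotential

section Existence

variable [∀ k, LinearOrder (α k)] [Nonempty ι] {c : (∀ k, α k) → ℝ} {M : ℝ} {Γ : Set (∀ k, α k)}

theorem exists_isTightPotential_finset (hc : IsSubmodular c) (hM : ∀ x, |c x| ≤ M)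
    (hΓ : IsChain (· ≤ ·) Γ) (u : Finset (∀ k, α k)) (hne : (Γ ∩ u).Nonempty) :
    ∃ φ, IsTightPotential c (fun k => Function.eval k '' u) (Γ ∩ u) φ ∧
      ∀ k a, |φ k a| ≤ 3 * (Fintype.card ι + 1) * M := by
  classical
  obtain ⟨p, hp⟩ := hne
  set A : ∀ k, Finset (α k) := fun k => u.image (Function.eval k)
  have hmem : ∀ x ∈ u, ∀ k, x k ∈ A k := fun x hx k => Finset.mem_image_of_mem _ hx
  have hA : ∀ k, (A k).Nonempty := fun k => ⟨p k, hmem p hp.2 k⟩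
  obtain ⟨φ, hφ⟩ := exists_isTightPotential_grid hc A
    ⟨fun k => (A k).max' (hA k), Fintype.mem_piFinset.2 fun k => Finset.max'_mem _ _⟩
    (hΓ.mono inter_subset_left) fun x hx k _ =>
      ⟨hmem x hx.2 k, Finset.le_max' _ _ (hmem x hx.2 k)⟩
  have hbox : ∀ k, (A k : Set (α k)) ∩ Iic ((A k).max' (hA k)) = Function.eval k '' u := fun k => by
    rw [inter_eq_left.2 fun a ha => Finset.le_max' _ _ ha, Finset.coe_image]
  simp only [hbox] at hφ
  obtain ⟨s, hs⟩ := hφ.exists_clamp_add_const hM (fun x hx k _ => ⟨x, hx.2, rfl⟩) ⟨p, hp⟩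
  exact ⟨_, hs, fun k a => abs_clamp_le
    (mul_nonneg (by positivity) ((abs_nonneg _).trans (hM p))) _⟩

theorem exists_isTightPotential (hc : IsSubmodular c) (hM : ∀ x, |c x| ≤ M)
    (hΓ : IsChain (· ≤ ·) Γ) (hne : Γ.Nonempty) :
    ∃ φ, IsTightPotential c (fun _ => univ) Γ φ := by
  classical
  obtain ⟨p, hp⟩ := hne
  set B := 3 * (Fintype.card ι + 1) * M
  have hcomp : IsCompact (univ.pi fun k => univ.pi fun _ : α k => Icc (-B) B) :=
    isCompact_univ_pi fun _ => isCompact_univ_pi fun _ => isCompact_Icc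
  have hcont : ∀ x : ∀ k, α k, Continuous fun φ : ∀ k, α k → ℝ => ∑ k, φ k (x k) := fun x => by
    fun_prop
  obtain ⟨φ, -, hφ⟩ := hcomp.inter_iInter_nonempty
    (fun x => {φ : ∀ k, α k → ℝ | ∑ k, φ k (x k) ≤ c x} ∩
      ⋂ _ : x ∈ Γ, {φ | ∑ k, φ k (x k) = c x})
    (fun x => (isClosed_le (hcont x) continuous_const).inter <|
      isClosed_iInter fun _ => isClosed_eq (hcont x) continuous_const) fun u => by
    obtain ⟨φ, hφ, hB⟩ := exists_isTightPotential_finset hc hM hΓ (insert p u)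
      ⟨p, hp, Finset.mem_insert_self _ _⟩
    refine ⟨φ, fun k _ a _ => abs_le.1 (hB k a), mem_iInter₂.2 fun x hx => ?_⟩
    have hx' : x ∈ insert p u := Finset.mem_insert_of_mem hx
    exact ⟨hφ.sum_le x fun k _ => ⟨x, hx', rfl⟩, mem_iInter.2 fun h => hφ.sum_eq x ⟨h, hx'⟩⟩
  exact ⟨φ, fun x _ => (mem_iInter.1 hφ x).1, fun x hx => mem_iInter.1 (mem_iInter.1 hφ x).2 hx⟩

end Existence

section Conjugate

variable {c : (∀ k, α k) → ℝ} {Γ : Set (∀ k, α k)} {φ : ∀ k, α k → ℝ}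

/-- The `c`-conjugate of the potentials `φ` in the coordinate `k`: the largest function which is
admissible together with the `φ j` for `j ≠ k`. -/
noncomputable def conjugate [DecidableEq ι] (c : (∀ k, α k) → ℝ) (φ : ∀ k, α k → ℝ) (k : ι)
    (a : α k) : ℝ :=
  ⨅ y : ∀ k, α k, (c (Function.update y k a) - ∑ j ∈ {k}ᶜ, φ j (y j))

namespace IsTightPotential

section

variable [DecidableEq ι]

theorem apply_le_sub_sum (hφ : IsTightPotential c (fun _ => univ) Γ φ) (y : ∀ k, α k) (k : ι)
    (a : α k) : φ k a ≤ c (Function.update y k a) - ∑ j ∈ {k}ᶜ, φ j (y j) := by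
  have hle := hφ.sum_le_univ (Function.update y k a)
  rw [sum_update_apply] at hle
  linarith

theorem bddBelow_range_sub_sum (hφ : IsTightPotential c (fun _ => univ) Γ φ) (k : ι) (a : α k) :
    BddBelow (range fun y : ∀ k, α k => c (Function.update y k a) - ∑ j ∈ {k}ᶜ, φ j (y j)) :=
  ⟨φ k a, forall_mem_range.2 fun y => hφ.apply_le_sub_sum y k a⟩

theorem update_conjugate (hφ : IsTightPotential c (fun _ => univ) Γ φ) (k : ι) :
    IsTightPotential c (fun _ => univ) Γ (Function.update φ k (conjugate c φ k)) := by
  have hsum : ∀ x : ∀ k, α k, ∑ j, Function.update φ k (conjugate c φ k) j (x j) =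
      conjugate c φ k (x k) + ∑ j ∈ {k}ᶜ, φ j (x j) := fun x => by
    simp_rw [Function.apply_update (fun j (f : α j → ℝ) => f (x j))]
    rw [Finset.sum_update_of_mem (Finset.mem_univ k), Finset.compl_eq_univ_sdiff]
  have hadm : ∀ x, ∑ j, Function.update φ k (conjugate c φ k) j (x j) ≤ c x := fun x => by
    have hle := ciInf_le (hφ.bddBelow_range_sub_sum k (x k)) x
    rw [Function.update_eq_self] at hle
    rw [hsum]
    exact le_sub_iff_add_le.1 hle
  refine ⟨fun x _ => hadm x, fun x hx => (hadm x).antisymm ?_⟩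
  have : Nonempty (∀ k, α k) := ⟨x⟩
  rw [hsum, ← hφ.sum_eq x hx, Fintype.sum_eq_add_sum_compl k]
  gcongr
  exact le_ciInf fun y => hφ.apply_le_sub_sum y k (x k)

end

variable [∀ k, TopologicalSpace (α k)] [∀ k, MeasurableSpace (α k)]
  [∀ k, OpensMeasurableSpace (α k)]

theorem measurable_conjugate [DecidableEq ι] (hφ : IsTightPotential c (fun _ => univ) Γ φ)
    (hc : UpperSemicontinuous c) (k : ι) : Measurable (conjugate c φ k) := by
  refine UpperSemicontinuous.measurable <|
    upperSemicontinuous_ciInf (hφ.bddBelow_range_sub_sum k) fun y => ?_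
  simp only [sub_eq_add_neg]
  exact (hc.comp (continuous_const.update k continuous_id)).add upperSemicontinuous_const

theorem exists_measurable (hφ : IsTightPotential c (fun _ => univ) Γ φ)
    (hc : UpperSemicontinuous c) (s : Finset ι) :
    ∃ ψ, IsTightPotential c (fun _ => univ) Γ ψ ∧ ∀ k ∈ s, Measurable (ψ k) := by
  classical
  induction s using Finset.induction_on with
  | empty => exact ⟨φ, hφ, by simp⟩
  | insert k s _ ih =>
    obtain ⟨ψ, hψ, hmeas⟩ := ih
    refine ⟨_, hψ.update_conjugate k, fun j hj => ?_⟩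
    rcases eq_or_ne j k with rfl | hjk
    · rw [Function.update_self]
      exact hψ.measurable_conjugate hc j
    · rw [Function.update_of_ne hjk]
      exact hmeas j ((Finset.mem_insert.1 hj).resolve_left hjk)

end IsTightPotential

theorem exists_measurable_isTightPotential [∀ k, LinearOrder (α k)]
    [∀ k, TopologicalSpace (α k)] [∀ k, MeasurableSpace (α k)] [∀ k, OpensMeasurableSpace (α k)]
    [Nonempty ι] {M : ℝ} (hc : IsSubmodular c) (hcs : UpperSemicontinuous c)
    (hM : ∀ x, |c x| ≤ M) (hΓ : IsChain (· ≤ ·) Γ) (hne : Γ.Nonempty) :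
    ∃ φ, IsTightPotential c (fun _ => univ) Γ φ ∧
      ∀ k, Measurable (φ k) ∧ ∃ B, ∀ a, |φ k a| ≤ B := by
  obtain ⟨φ, hφ⟩ := exists_isTightPotential hc hM hΓ hne
  obtain ⟨ψ, hψ, hmeas⟩ := hφ.exists_measurable hcs Finset.univ
  obtain ⟨s, hs⟩ := hψ.exists_clamp_add_const hM (fun _ _ _ _ => trivial) hne
  refine ⟨_, hs, fun k => ⟨(measurable_clamp _).comp ((hmeas k (Finset.mem_univ k)).add_const _),
    _, fun a => abs_clamp_le (mul_nonneg (by positivity) ?_) _⟩⟩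
  exact (abs_nonneg _).trans (hM hne.some)

end Conjugate

end Potentials

section MonotoneTransport

open ProbabilityTheory

variable {μ ν : Measure ℝ} {a b u y : ℝ}

theorem continuous_cdf [IsProbabilityMeasure μ] [NullSingletonClass μ] : Continuous (cdf μ) := by
  refine continuous_iff_continuousAt.2 fun x => ?_
  rw [(cdf μ).mono.continuousAt_iff_leftLim_eq_rightLim, StieltjesFunction.rightLim_eq]
  refine ((cdf μ).mono.leftLim_le le_rfl).antisymm ?_
  have hjump := (cdf μ).measure_singleton x
  rw [measure_cdf, measure_singleton, eq_comm, ENNReal.ofReal_eq_zero] at hjump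
  exact sub_nonpos.1 hjump

theorem mem_range_cdf [IsProbabilityMeasure μ] [NullSingletonClass μ] (hu : u ∈ Ioo 0 1) :
    u ∈ range (cdf μ) :=
  mem_range_of_exists_le_of_exists_ge continuous_cdf
    ((tendsto_cdf_atBot μ).eventually_le_const hu.1).exists
    ((tendsto_cdf_atTop μ).eventually_const_le hu.2).exists

theorem measureReal_cdf_le [IsProbabilityMeasure μ] [NullSingletonClass μ] (hu : u ∈ Icc 0 1) :
    μ.real {x | cdf μ x ≤ u} = u := by
  refine le_antisymm (le_of_forall_gt_imp_ge_of_dense fun v hv => ?_)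
    (le_of_forall_lt_imp_le_of_dense fun v hv => ?_)
  · rcases le_or_gt 1 v with hv1 | hv1
    · exact measureReal_le_one.trans hv1
    obtain ⟨x, rfl⟩ := mem_range_cdf (μ := μ) ⟨hu.1.trans_lt hv, hv1⟩
    rw [cdf_eq_real μ x]
    exact measureReal_mono fun y hy => ((cdf μ).mono.reflect_lt (lt_of_le_of_lt hy hv)).le
  · rcases le_or_gt v 0 with hv0 | hv0
    · exact hv0.trans measureReal_nonneg
    obtain ⟨x, rfl⟩ := mem_range_cdf (μ := μ) ⟨hv0, hv.trans_le hu.2⟩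
    rw [cdf_eq_real μ x]
    exact measureReal_mono fun y hy => ((cdf μ).mono hy).trans hv.le

/-- The quantile function of `ν`, restricted to values in `Ici a`. Without a lower bound the set at
level `u = 0` would be all of `ℝ`, whose `sInf` is a junk value. -/
noncomputable def quantileAbove (ν : Measure ℝ) (a u : ℝ) : ℝ :=
  sInf {y ∈ Ici a | u ≤ cdf ν y}

theorem quantileAbove_le (hy : a ≤ y) (h : u ≤ cdf ν y) : quantileAbove ν a u ≤ y :=
  csInf_le ⟨a, fun _ hz => hz.1⟩ ⟨hy, h⟩

theorem nonempty_quantile_set (hab : a ≤ b) (hb : cdf ν b = 1) (hu : u ≤ 1) :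
    {y ∈ Ici a | u ≤ cdf ν y}.Nonempty :=
  ⟨b, hab, hu.trans_eq hb.symm⟩

theorem le_quantileAbove (hab : a ≤ b) (hb : cdf ν b = 1) (hu : u ≤ 1) :
    a ≤ quantileAbove ν a u :=
  le_csInf (nonempty_quantile_set hab hb hu) fun _ hy => hy.1

theorem monotoneOn_quantileAbove (hab : a ≤ b) (hb : cdf ν b = 1) :
    MonotoneOn (quantileAbove ν a) (Iic 1) := fun _ _ _ hv huv =>
  csInf_le_csInf ⟨a, fun _ hz => hz.1⟩ (nonempty_quantile_set hab hb hv)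
    fun _ hy => ⟨hy.1, huv.trans hy.2⟩

theorem quantileAbove_le_iff (hab : a ≤ b) (hb : cdf ν b = 1) (hu : u ≤ 1)
    (hy : a ≤ y) : quantileAbove ν a u ≤ y ↔ u ≤ cdf ν y := by
  refine ⟨fun h => ?_, quantileAbove_le hy⟩
  rw [← (cdf ν).iInf_Ioi_eq y]
  refine le_ciInf fun ⟨z, hz⟩ => ?_
  obtain ⟨w, hw, hwz⟩ := exists_lt_of_csInf_lt (nonempty_quantile_set hab hb hu)
    (lt_of_le_of_lt h hz)
  exact hw.2.trans ((cdf ν).mono hwz.le)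

theorem map_quantileAbove_cdf [IsProbabilityMeasure μ] [NullSingletonClass μ]
    [IsProbabilityMeasure ν] (hab : a ≤ b) (hb : cdf ν b = 1)
    (ha : ∀ y < a, cdf ν y = 0) :
    Monotone (fun x => quantileAbove ν a (cdf μ x)) ∧
      μ.map (fun x => quantileAbove ν a (cdf μ x)) = ν := by
  have hmono : Monotone fun x => quantileAbove ν a (cdf μ x) := fun x y hxy =>
    monotoneOn_quantileAbove hab hb (cdf_le_one μ x) (cdf_le_one μ y) ((cdf μ).mono hxy)
  have := Measure.isProbabilityMeasure_map (μ := μ) hmono.measurable.aemeasurable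
  refine ⟨hmono, Measure.eq_of_cdf _ _ (StieltjesFunction.ext fun y => ?_)⟩
  rw [cdf_eq_real, map_measureReal_apply hmono.measurable measurableSet_Iic]
  rcases lt_or_ge y a with hya | hya
  · have hempty : (fun x => quantileAbove ν a (cdf μ x)) ⁻¹' Iic y = ∅ :=
      eq_empty_of_forall_notMem fun x hx =>
        (hya.trans_le (le_quantileAbove hab hb (cdf_le_one μ x))).not_ge hx
    rw [hempty, measureReal_empty, ha y hya]
  · have hlevel : (fun x => quantileAbove ν a (cdf μ x)) ⁻¹' Iic y = {x | cdf μ x ≤ cdf ν y} :=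
      Set.ext fun x => quantileAbove_le_iff hab hb (cdf_le_one μ x) hya
    rw [hlevel, measureReal_cdf_le ⟨cdf_nonneg ν y, cdf_le_one ν y⟩]

theorem exists_monotone_map_eq (μ ν : Measure ℝ) [IsProbabilityMeasure μ] [IsProbabilityMeasure ν]
    [NullSingletonClass μ] {s : Set ℝ} (hs : Bornology.IsBounded s) (hν : ν sᶜ = 0) :
    ∃ T : ℝ → ℝ, Monotone T ∧ μ.map T = ν := by
  obtain ⟨a, ha⟩ := hs.bddBelow
  obtain ⟨b, hb⟩ := hs.bddAbove
  have hs : s.Nonempty := by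
    by_contra! h
    simp [h] at hν
  have hcdf_a : ∀ y < a, cdf ν y = 0 := fun y hy => by
    rw [cdf_eq_real, measureReal_eq_zero_iff]
    have hsub : Iic y ⊆ sᶜ := fun x hx hxs => (lt_of_le_of_lt hx hy).not_ge (ha hxs)
    exact measure_mono_null hsub hν
  have hcdf_b : cdf ν b = 1 := by
    have hnull : ν (Iic b)ᶜ = 0 := measure_mono_null (fun x hx hxs => hx (hb hxs)) hν
    rw [cdf_eq_real, measureReal_def, (prob_compl_eq_zero_iff measurableSet_Iic).1 hnull,
      ENNReal.toReal_one]
  exact ⟨_, map_quantileAbove_cdf (hs.elim fun x hx => (ha hx).trans (hb hx)) hcdf_b hcdf_a⟩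

theorem ae_eq_of_monotone_of_interlace {μ : Measure ℝ} [NullSingletonClass μ] {S T : ℝ → ℝ}
    (hT : Monotone T) (h : ∀ᵐ x ∂μ, (∀ y, x < y → S x ≤ T y) ∧ ∀ y < x, T y ≤ S x) :
    S =ᵐ[μ] T := by
  have hcont : ∀ᵐ x ∂μ, ContinuousAt T x := hT.countable_not_continuousAt.measure_zero μ
  filter_upwards [h, hcont] with x ⟨hup, hdown⟩ hx
  have hright : ∀ᶠ y in nhdsWithin x (Ioi x), S x ≤ T y :=
    eventually_mem_nhdsWithin.mono fun y hy => hup y hy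
  have hleft : ∀ᶠ y in nhdsWithin x (Iio x), T y ≤ S x :=
    eventually_mem_nhdsWithin.mono fun y hy => hdown y hy
  exact le_antisymm (ge_of_tendsto (hx.mono_left nhdsWithin_le_nhds) hright)
    (le_of_tendsto (hx.mono_left nhdsWithin_le_nhds) hleft)

end MonotoneTransport

section ContactSet

theorem sum_apply_inf_add_sum_apply_sup {ι : Type*} [Fintype ι] {α : ι → Type*}
    [∀ k, LinearOrder (α k)] (φ : ∀ k, α k → ℝ) (x y : ∀ k, α k) :
    ∑ k, φ k ((x ⊓ y) k) + ∑ k, φ k ((x ⊔ y) k) = ∑ k, φ k (x k) + ∑ k, φ k (y k) := by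
  rw [← Finset.sum_add_distrib, ← Finset.sum_add_distrib]
  refine Finset.sum_congr rfl fun k _ => ?_
  rw [Pi.inf_apply, Pi.sup_apply]
  rcases le_total (x k) (y k) with h | h
  · rw [inf_eq_left.2 h, sup_eq_right.2 h]
  · rw [inf_eq_right.2 h, sup_eq_left.2 h, add_comm]

theorem StrictlySubmodular.isChain_contact {K : ℕ} {c : (Fin K → ℝ) → ℝ}
    (hc : StrictlySubmodular c) {φ : Fin K → ℝ → ℝ} (hφ : ∀ x, ∑ k, φ k (x k) ≤ c x) :
    IsChain (· ≤ ·) {x | ∑ k, φ k (x k) = c x} := by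
  refine fun x (hx : _ = c x) y (hy : _ = c y) _ => ?_
  by_contra! hxy
  linarith [hc.inf_add_sup_lt hxy.1 hxy.2, hφ (x ⊓ y), hφ (x ⊔ y),
    sum_apply_inf_add_sum_apply_sup φ x y]

end ContactSet

section Transport

variable {K : ℕ} {μ : Fin K → Measure ℝ} {c : (Fin K → ℝ) → ℝ}

namespace IsMCoupling

variable {π : Measure (Fin K → ℝ)} {φ : Fin K → ℝ → ℝ}

theorem measurePreserving_eval (hπ : IsMCoupling π μ) (k : Fin K) :
    MeasurePreserving (Function.eval k) π (μ k) :=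
  ⟨measurable_pi_apply k, hπ k⟩

theorem integrable_of_bounded [NeZero K] [IsProbabilityMeasure (μ 0)] (hπ : IsMCoupling π μ)
    (hc : Measurable c) (hbdd : ∃ M, ∀ x, |c x| ≤ M) : Integrable c π := by
  have : IsProbabilityMeasure (π.map fun x => x 0) := hπ 0 ▸ inferInstance
  have := Measure.isProbabilityMeasure_of_map (μ := π) fun x => x 0
  obtain ⟨M, hM⟩ := hbdd
  exact .of_bound hc.aestronglyMeasurable M (.of_forall hM)

theorem integrable_eval (hπ : IsMCoupling π μ) {k : Fin K} (hφ : Integrable (φ k) (μ k)) :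
    Integrable (fun x => φ k (x k)) π :=
  (hπ.measurePreserving_eval k).integrable_comp_of_integrable hφ

theorem integrable_sum (hπ : IsMCoupling π μ) (hφ : ∀ k, Integrable (φ k) (μ k)) :
    Integrable (fun x => ∑ k, φ k (x k)) π :=
  integrable_finsetSum _ fun k _ => hπ.integrable_eval (hφ k)

theorem integral_sum (hπ : IsMCoupling π μ) (hφ : ∀ k, Integrable (φ k) (μ k)) :
    ∫ x, ∑ k, φ k (x k) ∂π = ∑ k, ∫ a, φ k a ∂μ k := by
  rw [integral_finsetSum _ fun k _ => hπ.integrable_eval (hφ k)]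
  refine Finset.sum_congr rfl fun k _ => ?_
  have hmeas := (hφ k).aestronglyMeasurable
  rw [← hπ k] at hmeas ⊢
  exact (integral_map (measurable_pi_apply k).aemeasurable hmeas).symm

theorem sum_integral_le (hπ : IsMCoupling π μ) (hc : Integrable c π)
    (hφ : ∀ k, Integrable (φ k) (μ k)) (hφc : ∀ x, ∑ k, φ k (x k) ≤ c x) :
    ∑ k, ∫ a, φ k a ∂μ k ≤ ∫ x, c x ∂π :=
  hπ.integral_sum hφ ▸ integral_mono (hπ.integrable_sum hφ) hc hφc

end IsMCoupling

variable [NeZero K]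

namespace MongeFeasible

variable {T T' : Fin K → ℝ → ℝ}

theorem measurable_pi (hT : MongeFeasible μ T) : Measurable fun x k => T k x :=
  measurable_pi_lambda _ fun k => (hT.2 k).1

theorem isMCoupling (hT : MongeFeasible μ T) : IsMCoupling ((μ 0).map fun x k => T k x) μ :=
  fun k => (Measure.map_map (measurable_pi_apply k) hT.measurable_pi).trans (hT.2 k).2

theorem integral_map {f : (Fin K → ℝ) → ℝ} (hT : MongeFeasible μ T)
    (hf : Integrable f ((μ 0).map fun x k => T k x)) :
    ∫ x, f x ∂(μ 0).map (fun x k => T k x) = ∫ x, f (fun k => T k x) ∂μ 0 :=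
  MeasureTheory.integral_map hT.measurable_pi.aemeasurable hf.aestronglyMeasurable

theorem sum_integral_eq_iff {φ : Fin K → ℝ → ℝ} (hT : MongeFeasible μ T)
    (hc : Integrable c ((μ 0).map fun x k => T k x)) (hφ : ∀ k, Integrable (φ k) (μ k))
    (hφc : ∀ x, ∑ k, φ k (x k) ≤ c x) :
    ∑ k, ∫ a, φ k a ∂μ k = ∫ x, c (fun k => T k x) ∂μ 0 ↔
      ∀ᵐ x ∂μ 0, ∑ k, φ k (T k x) = c fun k => T k x := by
  have hsum := hT.isMCoupling.integrable_sum hφ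
  rw [← hT.isMCoupling.integral_sum hφ, hT.integral_map hsum]
  exact integral_eq_iff_of_ae_le (hsum.comp_measurable hT.measurable_pi)
    (hc.comp_measurable hT.measurable_pi) (.of_forall fun x => hφc _)

theorem ae_eq_of_isChain [NullSingletonClass (μ 0)] (hT : MongeFeasible μ T)
    (hT' : MongeFeasible μ T') (hmono : ∀ k, Monotone (T k)) {Γ : Set (Fin K → ℝ)}
    (hΓ : IsChain (· ≤ ·) Γ) (hTΓ : ∀ x, (fun k => T k x) ∈ Γ)
    (hT'Γ : ∀ᵐ x ∂μ 0, (fun k => T' k x) ∈ Γ) (k : Fin K) : T' k =ᵐ[μ 0] T k := by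
  have hzero : ∀ x, T' 0 x = x ∧ T 0 x = x := fun x => by simp only [hT'.1, hT.1, id, and_self]
  refine ae_eq_of_monotone_of_interlace (hmono k) (hT'Γ.mono fun x hx => ⟨fun y hxy => ?_,
    fun y hyx => ?_⟩)
  · refine (hΓ.total hx (hTΓ y)).resolve_right (fun h => hxy.not_ge ?_) k
    simpa only [hzero] using h 0
  · refine (hΓ.total hx (hTΓ y)).resolve_left (fun h => hyx.not_ge ?_) k
    simpa only [hzero] using h 0

end MongeFeasible

theorem exists_monotone_mongeFeasible [∀ k, IsProbabilityMeasure (μ k)]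
    [NullSingletonClass (μ 0)] (hμ : ∀ k ≠ 0, ∃ s, Bornology.IsBounded s ∧ μ k sᶜ = 0) :
    ∃ T, MongeFeasible μ T ∧ ∀ k, Monotone (T k) := by
  have h : ∀ k, ∃ T : ℝ → ℝ, Monotone T ∧ (μ 0).map T = μ k ∧ (k = 0 → T = id) := fun k => by
    rcases eq_or_ne k 0 with rfl | hk
    · exact ⟨id, monotone_id, Measure.map_id, fun _ => rfl⟩
    · obtain ⟨s, hs, hμs⟩ := hμ k hk
      obtain ⟨T, hT, hmap⟩ := exists_monotone_map_eq (μ 0) (μ k) hs hμs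
      exact ⟨T, hT, hmap, fun h => absurd h hk⟩
  choose T hmono hmap hid using h
  exact ⟨T, ⟨hid 0 rfl, fun k => ⟨(hmono k).measurable, hmap k⟩⟩, hmono⟩

theorem exists_integrable_isTightPotential [∀ k, IsFiniteMeasure (μ k)] {T : Fin K → ℝ → ℝ}
    (hmono : ∀ k, Monotone (T k)) (hc : IsSubmodular c) (hcs : UpperSemicontinuous c)
    (hbdd : ∃ M, ∀ x, |c x| ≤ M) :
    ∃ φ, IsTightPotential c (fun _ => univ) (range fun x k => T k x) φ ∧
      ∀ k, Integrable (φ k) (μ k) := by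
  obtain ⟨M, hM⟩ := hbdd
  have hchain : IsChain (· ≤ ·) (range fun x k => T k x) :=
    Monotone.isChain_range fun _ _ hxy k => hmono k hxy
  obtain ⟨φ, hφ, hmeas⟩ :=
    exists_measurable_isTightPotential hc hcs hM hchain (range_nonempty _)
  refine ⟨φ, hφ, fun k => ?_⟩
  obtain ⟨hk, B, hB⟩ := hmeas k
  exact .of_bound hk.aestronglyMeasurable B (.of_forall hB)

end Transport

theorem multi_marginal_submodular_general {K : ℕ} [NeZero K]
    (μ : Fin K → Measure ℝ) [∀ k, IsProbabilityMeasure (μ k)] [NullSingletonClass (μ 0)]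
    (hμ : ∀ k ≠ 0, ∃ s, Bornology.IsBounded s ∧ μ k sᶜ = 0)
    (c : (Fin K → ℝ) → ℝ) (hc : UpperSemicontinuous c)
    (hbdd : ∃ M : ℝ, ∀ x, |c x| ≤ M)
    (hsub : StrictlySubmodular c) :
    ∃ v : ℝ,
      (∃ π : Measure (Fin K → ℝ), IsMCoupling π μ ∧ ∫ x, c x ∂π = v)
      ∧ v = sInf {r : ℝ | ∃ π : Measure (Fin K → ℝ), IsMCoupling π μ ∧ r = ∫ x, c x ∂π}
      ∧ (∃ φ : Fin K → ℝ → ℝ,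
          (∀ k, Integrable (φ k) (μ k)) ∧
          (∀ x : Fin K → ℝ, ∑ k, φ k (x k) ≤ c x) ∧
          ∑ k, ∫ x, φ k x ∂(μ k) = v)
      ∧ v = sSup {r : ℝ | ∃ φ : Fin K → ℝ → ℝ,
            (∀ k, Integrable (φ k) (μ k)) ∧
            (∀ x : Fin K → ℝ, ∑ k, φ k (x k) ≤ c x) ∧
            r = ∑ k, ∫ x, φ k x ∂(μ k)}
      ∧ (∃ T : Fin K → ℝ → ℝ, MongeFeasible μ T ∧
          (∀ k, Monotone (T k)) ∧
          ∫ x, c (fun k => T k x) ∂(μ 0) = v ∧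
          (∀ T' : Fin K → ℝ → ℝ, MongeFeasible μ T' →
            ∫ x, c (fun k => T' k x) ∂(μ 0) = v →
            ∀ k, T' k =ᵐ[μ 0] T k))
      ∧ v = sInf {r : ℝ | ∃ T : Fin K → ℝ → ℝ, MongeFeasible μ T ∧
            r = ∫ x, c (fun k => T k x) ∂(μ 0)} := by
  obtain ⟨T, hT, hmono⟩ := exists_monotone_mongeFeasible hμ
  obtain ⟨φ, hφ, hφint⟩ :=
    exists_integrable_isTightPotential (μ := μ) hmono hsub.isSubmodular hc hbdd
  have hci : ∀ {π}, IsMCoupling π μ → Integrable c π := fun hπ =>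
    hπ.integrable_of_bounded hc.measurable hbdd
  have hcT : ∀ {S}, MongeFeasible μ S →
      ∫ x, c x ∂(μ 0).map (fun x k => S k x) = ∫ x, c (fun k => S k x) ∂μ 0 := fun hS =>
    hS.integral_map (hci hS.isMCoupling)
  have hval : ∑ k, ∫ a, φ k a ∂μ k = ∫ x, c (fun k => T k x) ∂μ 0 :=
    (hT.sum_integral_eq_iff (hci hT.isMCoupling) hφint hφ.sum_le_univ).2
      (.of_forall fun x => hφ.sum_eq _ ⟨x, rfl⟩)
  have hlow : ∀ {π}, IsMCoupling π μ → ∫ x, c (fun k => T k x) ∂μ 0 ≤ ∫ x, c x ∂π := fun hπ =>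
    hval ▸ hπ.sum_integral_le (hci hπ) hφint hφ.sum_le_univ
  refine ⟨_, ⟨_, hT.isMCoupling, hcT hT⟩,
    .symm (IsLeast.csInf_eq ⟨⟨_, hT.isMCoupling, (hcT hT).symm⟩, ?_⟩),
    ⟨φ, hφint, hφ.sum_le_univ, hval⟩,
    .symm (IsGreatest.csSup_eq ⟨⟨φ, hφint, hφ.sum_le_univ, hval.symm⟩, ?_⟩),
    ⟨T, hT, hmono, rfl, fun T' hT' hT'v => ?_⟩,
    .symm (IsLeast.csInf_eq ⟨⟨T, hT, rfl⟩, ?_⟩)⟩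
  · rintro _ ⟨π, hπ, rfl⟩
    exact hlow hπ
  · rintro _ ⟨ψ, hψ, hψc, rfl⟩
    exact hcT hT ▸ hT.isMCoupling.sum_integral_le (hci hT.isMCoupling) hψ hψc
  · exact hT.ae_eq_of_isChain hT' hmono (hsub.isChain_contact hφ.sum_le_univ)
      (fun x => hφ.sum_eq _ ⟨x, rfl⟩)
      ((hT'.sum_integral_eq_iff (hci hT'.isMCoupling) hφint hφ.sum_le_univ).1
        (hval.trans hT'v.symm))
  · rintro _ ⟨S, hS, rfl⟩
    exact hcT hS ▸ hlow hS.isMCoupling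

/-- Multi-marginal optimal transport with a continuous, bounded, strictly submodular cost on
`ℝ`: the Kantorovich problem, its dual, and the Monge problem all admit solutions with equal
values, and the Monge problem has a `μ₁`-a.s. unique solution consisting of non-decreasing
maps. -/
theorem multi_marginal_submodular
    {K : ℕ} [NeZero K]
    (μ : Fin K → Measure ℝ) [∀ k, IsProbabilityMeasure (μ k)]
    (Xs : Fin K → Set ℝ) (hXs : ∀ k, IsCompact (Xs k))
    (hsupp : ∀ k, μ k (Xs k)ᶜ = 0)
    (hac : ∀ k, μ k ≪ volume)
    (c : (Fin K → ℝ) → ℝ) (hc : Continuous c)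
    (hbdd : ∃ M : ℝ, ∀ x, |c x| ≤ M)
    (hsub : StrictlySubmodular c) :
    ∃ v : ℝ,
      (∃ π : Measure (Fin K → ℝ), IsMCoupling π μ ∧ ∫ x, c x ∂π = v)
      ∧ v = sInf {r : ℝ | ∃ π : Measure (Fin K → ℝ), IsMCoupling π μ ∧ r = ∫ x, c x ∂π}
      ∧ (∃ φ : Fin K → ℝ → ℝ,
          (∀ k, Integrable (φ k) (μ k)) ∧
          (∀ x : Fin K → ℝ, ∑ k, φ k (x k) ≤ c x) ∧
          ∑ k, ∫ x, φ k x ∂(μ k) = v)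
      ∧ v = sSup {r : ℝ | ∃ φ : Fin K → ℝ → ℝ,
            (∀ k, Integrable (φ k) (μ k)) ∧
            (∀ x : Fin K → ℝ, ∑ k, φ k (x k) ≤ c x) ∧
            r = ∑ k, ∫ x, φ k x ∂(μ k)}
      ∧ (∃ T : Fin K → ℝ → ℝ, MongeFeasible μ T ∧
          (∀ k, Monotone (T k)) ∧
          ∫ x, c (fun k => T k x) ∂(μ 0) = v ∧
          (∀ T' : Fin K → ℝ → ℝ, MongeFeasible μ T' →
            ∫ x, c (fun k => T' k x) ∂(μ 0) = v →
            ∀ k, T' k =ᵐ[μ 0] T k))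
      ∧ v = sInf {r : ℝ | ∃ T : Fin K → ℝ → ℝ, MongeFeasible μ T ∧
            r = ∫ x, c (fun k => T k x) ∂(μ 0)} := by
  have : NullSingletonClass (μ 0) := ⟨fun x => hac 0 (measure_singleton x)⟩
  exact multi_marginal_submodular_general μ (fun k _ => ⟨Xs k, (hXs k).isBounded, hsupp k⟩)
    c hc.upperSemicontinuous hbdd hsub
end
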